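/- If G is a finite simple graph on n vertices in which every vertex has degree exactly 3 (a cubic graph), then the restrained domination number of G satisfies 5·γ_r(G) ≤ 2·n; equivalently, G has a restrained dominating set of cardinality at most 2n/5. -/

import Mathlib

/-- `S` is a restrained dominating set of `G`: every vertex not in `S` has a
neighbor in `S` (domination) and also a neighbor not in `S` (restraint). -/
def IsRestrainedDomSet {V : Type*} (G : SimpleGraph V) (S : Set V) : Prop :=
  (∀ v ∉ S, ∃ u ∈ S, G.Adj v u) ∧ (∀ v ∉ S, ∃ u ∉ S, G.Adj v u)

/-- The restrained domination number of a finite graph: the minimum cardinality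
of a restrained dominating set. -/
noncomputable def restrainedDominationNumber {V : Type*} [Fintype V] (G : SimpleGraph V) : ℕ :=
  sInf {n : ℕ | ∃ S : Set V, IsRestrainedDomSet G S ∧ S.ncard = n}

/-!
Colour the vertices of a restrained dominating set white and the others black, so that every black
vertex has one or two black neighbours; call it a leaf or inner accordingly. Among all admissible
colourings take one with as many black vertices as possible and, subject to this, with as few white
vertices without black neighbour, as few black edges, and as few "deep" white vertices as possible.
Recolouring a bounded number of vertices near a white vertex must not improve such a colouring, and
this restricts which white vertices are adjacent to each other and to leaves. Counting edges then
shows that the degrees of the white vertices into the white set sum to at most the number of edges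
between white and inner black vertices. As every white vertex has degree three, and a leaf has two
white neighbours while an inner vertex has one, this gives `3 * #white ≤ 2 * #black`.
-/

namespace RestrainedDomination

open Finset

variable {V : Type*} {G : SimpleGraph V}

/-- A set `B` of black vertices, the others being white, such that every black vertex has a black
and a white neighbour: the complement of a restrained dominating set. -/
def IsBlackSet (G : SimpleGraph V) (B : Finset V) : Prop :=
  ∀ v ∈ B, (∃ u ∈ B, G.Adj v u) ∧ ∃ u ∉ B, G.Adj v u

open Classical in
/-- The number of neighbours of `v` in `S`. -/
noncomputable def degIn (G : SimpleGraph V) (S : Finset V) (v : V) : ℕ :=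
  #{u ∈ S | G.Adj v u}

/-- Every vertex has degree three. -/
def IsCubic (G : SimpleGraph V) : Prop :=
  ∀ v, (G.neighborSet v).ncard = 3

/-- The neighbours of `v` are the three distinct vertices `a`, `b`, `c`. -/
@[grind cases]
structure IsNbhd (G : SimpleGraph V) (v a b c : V) : Prop where
  ne₁₂ : a ≠ b
  ne₁₃ : a ≠ c
  ne₂₃ : b ≠ c
  adj_iff : ∀ t, G.Adj v t ↔ t = a ∨ t = b ∨ t = c

section degIn

variable {S T : Finset V} {v s s' : V}

theorem sum_degIn_comm (S T : Finset V) :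
    ∑ s ∈ S, degIn G T s = ∑ t ∈ T, degIn G S t := by
  classical
  simpa only [degIn, bipartiteAbove, bipartiteBelow, G.adj_comm] using
    sum_card_bipartiteAbove_eq_sum_card_bipartiteBelow (s := S) (t := T) G.Adj

theorem degIn_union [DecidableEq V] (h : Disjoint S T) (v : V) :
    degIn G (S ∪ T) v = degIn G S v + degIn G T v := by
  classical
  simp only [degIn, filter_union]
  exact card_union_of_disjoint (disjoint_filter_filter h)

theorem degIn_union_le [DecidableEq V] (S T : Finset V) (v : V) :
    degIn G (S ∪ T) v ≤ degIn G S v + degIn G T v := by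
  classical
  rw [degIn, filter_union]
  exact card_union_le _ _

theorem degIn_pos : 0 < degIn G S v ↔ ∃ s ∈ S, G.Adj v s := by
  classical
  simp only [degIn, card_pos, Finset.Nonempty, mem_filter]

theorem eq_of_degIn_le_one (h : degIn G S v ≤ 1) (hs : s ∈ S) (hs' : s' ∈ S) (hv : G.Adj v s)
    (hv' : G.Adj v s') : s = s' := by
  classical
  exact card_le_one.1 h s (mem_filter.2 ⟨hs, hv⟩) s' (mem_filter.2 ⟨hs', hv'⟩)

theorem exists_adj_ne_of_two_le_degIn (h : 2 ≤ degIn G S v) (s : V) :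
    ∃ s' ∈ S, G.Adj v s' ∧ s' ≠ s := by
  classical
  obtain ⟨s', hs', hne⟩ := exists_mem_ne h s
  exact ⟨s', (mem_filter.1 hs').1, (mem_filter.1 hs').2, hne⟩

theorem degIn_le_of_forall_adj (h : ∀ t ∈ S, G.Adj v t → t ∈ T) : degIn G S v ≤ degIn G T v := by
  classical
  exact card_le_card fun t ht =>
    mem_filter.2 ⟨h t (mem_filter.1 ht).1 (mem_filter.1 ht).2, (mem_filter.1 ht).2⟩

theorem degIn_mono (h : S ⊆ T) (v : V) : degIn G S v ≤ degIn G T v :=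
  degIn_le_of_forall_adj fun _ ht _ => h ht

theorem degIn_le_one (h : ∀ s ∈ S, ∀ t ∈ S, G.Adj v s → G.Adj v t → s = t) : degIn G S v ≤ 1 := by
  classical
  exact card_le_one.2 fun s hs t ht =>
    h s (mem_filter.1 hs).1 t (mem_filter.1 ht).1 (mem_filter.1 hs).2 (mem_filter.1 ht).2

end degIn

section IsNbhd

variable {S : Finset V} {v a b c s t : V}

@[grind →]
theorem IsNbhd.adj₁ (h : IsNbhd G v a b c) : G.Adj v a := by simp [h.adj_iff]

@[grind →]
theorem IsNbhd.adj₂ (h : IsNbhd G v a b c) : G.Adj v b := by simp [h.adj_iff]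

@[grind →]
theorem IsNbhd.adj₃ (h : IsNbhd G v a b c) : G.Adj v c := by simp [h.adj_iff]

@[grind →]
theorem IsNbhd.ne_center (h : IsNbhd G v a b c) : v ≠ a ∧ v ≠ b ∧ v ≠ c :=
  ⟨h.adj₁.ne, h.adj₂.ne, h.adj₃.ne⟩

@[grind →]
theorem IsNbhd.adj_symm (h : IsNbhd G v a b c) : G.Adj a v ∧ G.Adj b v ∧ G.Adj c v :=
  ⟨h.adj₁.symm, h.adj₂.symm, h.adj₃.symm⟩

theorem IsNbhd.rotate (h : IsNbhd G v a b c) : IsNbhd G v b c a := by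
  grind [IsNbhd.mk]

theorem IsNbhd.swap (h : IsNbhd G v a b c) : IsNbhd G v b a c := by
  grind [IsNbhd.mk]

open Classical in
theorem IsNbhd.degIn_eq (h : IsNbhd G v a b c) (S : Finset V) :
    degIn G S v = (if a ∈ S then 1 else 0) + (if b ∈ S then 1 else 0) +
      (if c ∈ S then 1 else 0) := by
  have hS : {u ∈ S | G.Adj v u} = ({a, b, c} : Finset V).filter (· ∈ S) := by
    ext t
    simp [h.adj_iff, and_comm]
  rw [degIn, hS, card_filter, sum_insert (by simp [h.ne₁₂, h.ne₁₃]), sum_insert (by simp [h.ne₂₃]),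
    sum_singleton, add_assoc]

theorem IsCubic.exists_isNbhd (hG : IsCubic G) (v : V) : ∃ a b c, IsNbhd G v a b c := by
  obtain ⟨a, b, c, hab, hac, hbc, h⟩ := Set.ncard_eq_three.1 (hG v)
  exact ⟨a, b, c, hab, hac, hbc, fun t => by rw [← SimpleGraph.mem_neighborSet, h]; simp⟩

theorem IsCubic.exists_isNbhd_of_adj (hG : IsCubic G) (h : G.Adj v a) :
    ∃ b c, IsNbhd G v a b c := by
  obtain ⟨x, y, z, hv⟩ := hG.exists_isNbhd v
  rcases (hv.adj_iff a).1 h with rfl | rfl | rfl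
  exacts [⟨_, _, hv⟩, ⟨_, _, hv.rotate⟩, ⟨_, _, hv.rotate.rotate⟩]

theorem IsCubic.exists_isNbhd_of_adj_of_adj (hG : IsCubic G) (ha : G.Adj v a) (hb : G.Adj v b)
    (hab : a ≠ b) : ∃ c, IsNbhd G v a b c := by
  obtain ⟨x, y, hv⟩ := hG.exists_isNbhd_of_adj ha
  rcases (hv.adj_iff b).1 hb with rfl | rfl | rfl
  exacts [absurd rfl hab, ⟨_, hv⟩, ⟨_, hv.rotate.swap.rotate.rotate⟩]

theorem IsCubic.eq_of_notMem (hG : IsCubic G) (h : 2 ≤ degIn G S v) (hs : s ∉ S) (ht : t ∉ S)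
    (hvs : G.Adj v s) (hvt : G.Adj v t) : s = t := by
  obtain ⟨a, b, c, hv⟩ := hG.exists_isNbhd v
  have := hv.degIn_eq S
  grind

variable [Fintype V]

theorem IsCubic.degIn_univ (hG : IsCubic G) (v : V) : degIn G univ v = 3 := by
  obtain ⟨a, b, c, h⟩ := hG.exists_isNbhd v
  simp [h.degIn_eq]

theorem IsCubic.degIn_add_degIn_compl [DecidableEq V] (hG : IsCubic G) (S : Finset V) (v : V) :
    degIn G S v + degIn G Sᶜ v = 3 := by
  rw [← degIn_union disjoint_compl_right, union_compl, hG.degIn_univ]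

end IsNbhd

section IsLeaf

variable {B : Finset V} {v y x s o a b c : V}

/-- A black vertex with exactly one black neighbour. -/
def IsLeaf (G : SimpleGraph V) (B : Finset V) (y : V) : Prop :=
  y ∈ B ∧ degIn G B y = 1

/-- A black vertex with exactly two black neighbours. -/
def IsInner (G : SimpleGraph V) (B : Finset V) (x : V) : Prop :=
  x ∈ B ∧ degIn G B x = 2

/-- `y` is a leaf with black neighbour `p` and white neighbours `o` and `o'`. -/
@[grind cases]
structure IsLeafNbhd (G : SimpleGraph V) (B : Finset V) (y p o o' : V) : Prop
    extends IsNbhd G y p o o' where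
  mem : y ∈ B
  mem₁ : p ∈ B
  notMem₂ : o ∉ B
  notMem₃ : o' ∉ B

/-- `x` is an inner black vertex with black neighbours `y` and `z` and white neighbour `v`. -/
@[grind cases]
structure IsInnerNbhd (G : SimpleGraph V) (B : Finset V) (x y z v : V) : Prop
    extends IsNbhd G x y z v where
  mem : x ∈ B
  mem₁ : y ∈ B
  mem₂ : z ∈ B
  notMem₃ : v ∉ B

/-- `v` is a white vertex with black neighbour `x` and white neighbours `u` and `w`. -/
@[grind cases]
structure IsWhiteOneNbhd (G : SimpleGraph V) (B : Finset V) (v x u w : V) : Prop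
    extends IsNbhd G v x u w where
  notMem : v ∉ B
  mem₁ : x ∈ B
  notMem₂ : u ∉ B
  notMem₃ : w ∉ B

/-- `v` is a white vertex with black neighbours `p` and `q` and white neighbour `u`. -/
@[grind cases]
structure IsWhiteTwoNbhd (G : SimpleGraph V) (B : Finset V) (v p q u : V) : Prop
    extends IsNbhd G v p q u where
  notMem : v ∉ B
  mem₁ : p ∈ B
  mem₂ : q ∈ B
  notMem₃ : u ∉ B

theorem IsCubic.isLeaf_or_isInner (hG : IsCubic G) (hB : IsBlackSet G B) (hv : v ∈ B) :
    IsLeaf G B v ∨ IsInner G B v := by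
  obtain ⟨⟨s, hs, hvs⟩, t, ht, hvt⟩ := hB v hv
  obtain ⟨a, b, c, h⟩ := hG.exists_isNbhd v
  have := h.degIn_eq B
  grind [IsLeaf, IsInner]

theorem IsLeaf.not_isInner (h : IsLeaf G B v) : ¬ IsInner G B v := by
  grind [IsLeaf, IsInner]

theorem IsLeaf.eq_of_adj (h : IsLeaf G B y) (ha : a ∈ B) (hb : b ∈ B) (hya : G.Adj y a)
    (hyb : G.Adj y b) : a = b :=
  eq_of_degIn_le_one h.2.le ha hb hya hyb

theorem IsInner.exists_adj_ne (h : IsInner G B x) (s : V) : ∃ s' ∈ B, G.Adj x s' ∧ s' ≠ s :=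
  exists_adj_ne_of_two_le_degIn h.2.ge s

theorem IsCubic.exists_white_adj_ne (hG : IsCubic G) (h : degIn G B v ≤ 1) (s : V) :
    ∃ s' ∉ B, G.Adj v s' ∧ s' ≠ s := by
  obtain ⟨a, b, c, hv⟩ := hG.exists_isNbhd v
  have := hv.degIn_eq B
  by_contra! hs
  grind

theorem IsLeafNbhd.isLeaf (h : IsLeafNbhd G B y a b c) : IsLeaf G B y :=
  ⟨h.mem, by grind [h.degIn_eq B]⟩

theorem IsInnerNbhd.isInner (h : IsInnerNbhd G B x a b c) : IsInner G B x :=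
  ⟨h.mem, by grind [h.degIn_eq B]⟩

theorem IsInnerNbhd.swap (h : IsInnerNbhd G B x a b c) : IsInnerNbhd G B x b a c :=
  ⟨h.toIsNbhd.swap, h.mem, h.mem₂, h.mem₁, h.notMem₃⟩

theorem IsWhiteTwoNbhd.swap (h : IsWhiteTwoNbhd G B v a b c) : IsWhiteTwoNbhd G B v b a c :=
  ⟨h.toIsNbhd.swap, h.notMem, h.mem₂, h.mem₁, h.notMem₃⟩

theorem IsLeaf.exists_isLeafNbhd (hG : IsCubic G) (h : IsLeaf G B y) (hx : x ∈ B) (ho : o ∉ B)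
    (hyx : G.Adj y x) (hyo : G.Adj y o) : ∃ o', IsLeafNbhd G B y x o o' := by
  obtain ⟨o', hy⟩ := hG.exists_isNbhd_of_adj_of_adj hyx hyo (by grind)
  exact ⟨o', hy, h.1, hx, ho, by grind [hy.degIn_eq B, IsLeaf]⟩

theorem IsInner.exists_isInnerNbhd (hG : IsCubic G) (h : IsInner G B x) (hv : v ∉ B)
    (hxv : G.Adj x v) : ∃ y z, IsInnerNbhd G B x y z v := by
  obtain ⟨y, z, hx⟩ := hG.exists_isNbhd_of_adj hxv
  have := hx.degIn_eq B
  exact ⟨y, z, hx.rotate, h.1, by grind [IsInner], by grind [IsInner], hv⟩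

theorem IsInner.exists_isInnerNbhd_of_adj (hG : IsCubic G) (h : IsInner G B x) (hv : v ∉ B)
    (hxv : G.Adj x v) (hy : y ∈ B) (hxy : G.Adj x y) : ∃ z, IsInnerNbhd G B x y z v := by
  obtain ⟨a, b, hx⟩ := h.exists_isInnerNbhd hG hv hxv
  rcases (hx.adj_iff y).1 hxy with rfl | rfl | rfl
  exacts [⟨_, hx⟩, ⟨_, hx.swap⟩, absurd hy hv]

end IsLeaf

section IsExchange

variable {B R A : Finset V} {t : V}

open Classical in
/-- Recolour the vertices of `R` white and those of `A` black. -/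
noncomputable def exchange (B R A : Finset V) : Finset V :=
  (B \ R) ∪ A

@[simp, grind =]
theorem mem_exchange : t ∈ exchange B R A ↔ t ∈ B ∧ t ∉ R ∨ t ∈ A := by
  simp [exchange]

/-- `R` consists of black vertices, `A` of white ones, and exchanging them turns a black set into a
black set. -/
structure IsExchange (G : SimpleGraph V) (B R A : Finset V) : Prop where
  mem_of_mem_removed : ∀ r ∈ R, r ∈ B
  notMem_of_mem_added : ∀ a ∈ A, a ∉ B
  added_black : ∀ a ∈ A, ∃ s ∈ exchange B R A, G.Adj a s
  added_white : ∀ a ∈ A, ∃ s ∉ exchange B R A, G.Adj a s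
  kept_black : ∀ r ∈ R, ∀ t ∈ B, t ∉ R → G.Adj r t → ∃ s ∈ exchange B R A, G.Adj t s
  kept_white : ∀ a ∈ A, ∀ t ∈ B, t ∉ R → G.Adj a t → ∃ s ∉ exchange B R A, G.Adj t s

namespace IsExchange

theorem isBlackSet (h : IsExchange G B R A) (hB : IsBlackSet G B) :
    IsBlackSet G (exchange B R A) := by
  intro t ht
  by_cases hA : t ∈ A
  · exact ⟨h.added_black t hA, h.added_white t hA⟩
  obtain ⟨htB, htR⟩ := (mem_exchange.1 ht).resolve_right hA
  obtain ⟨⟨r, hr, htr⟩, a, ha, hta⟩ := hB t htB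
  constructor
  · by_cases hrR : r ∈ R
    · exact h.kept_black r hrR t htB htR htr.symm
    · exact ⟨r, by grind, htr⟩
  · by_cases haA : a ∈ A
    · exact h.kept_white a haA t htB htR hta.symm
    · exact ⟨a, by grind, hta⟩

theorem card_add_card (h : IsExchange G B R A) : #(exchange B R A) + #R = #B + #A := by
  classical
  have hdisj : Disjoint (B \ R) A :=
    disjoint_left.2 fun t ht hA => h.notMem_of_mem_added t hA (mem_sdiff.1 ht).1
  have hR : R ⊆ B := h.mem_of_mem_removed
  have : exchange B R A = B \ R ∪ A := by ext; simp
  rw [this, card_union_of_disjoint hdisj, card_sdiff_of_subset hR]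
  have := card_le_card hR
  omega

end IsExchange

open Classical in
theorem sum_degIn_union {C D : Finset V} (h : Disjoint C D) :
    ∑ v ∈ C ∪ D, degIn G (C ∪ D) v =
      ∑ v ∈ C, degIn G C v + ∑ v ∈ D, (degIn G C v + degIn G (C ∪ D) v) := by
  have hCD : ∑ v ∈ C, degIn G D v = ∑ v ∈ D, degIn G C v := sum_degIn_comm C D
  simp only [sum_union h, degIn_union h, sum_add_distrib]
  omega

open Classical in
theorem IsExchange.sum_degIn_add (h : IsExchange G B R A) :
    ∑ v ∈ exchange B R A, degIn G (exchange B R A) v +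
        ∑ r ∈ R, (degIn G (B \ R) r + degIn G B r) =
      ∑ v ∈ B, degIn G B v + ∑ a ∈ A, (degIn G (B \ R) a + degIn G (exchange B R A) a) := by
  have hA : Disjoint (B \ R) A :=
    disjoint_left.2 fun t ht hA => h.notMem_of_mem_added t hA (mem_sdiff.1 ht).1
  have hB := sum_degIn_union (G := G) (sdiff_disjoint : Disjoint (B \ R) R)
  have hB' := sum_degIn_union (G := G) hA
  rw [sdiff_union_of_subset h.mem_of_mem_removed] at hB
  rw [exchange]
  omega

end IsExchange

section IsOptimal

variable {B B' : Finset V} {v : V}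

/-- A black set of maximum cardinality. -/
def IsMaxBlackSet (G : SimpleGraph V) (B : Finset V) : Prop :=
  IsBlackSet G B ∧ ∀ B', IsBlackSet G B' → #B' ≤ #B

theorem IsMaxBlackSet.card_added_le {R A : Finset V} (hB : IsMaxBlackSet G B)
    (h : IsExchange G B R A) : #A ≤ #R := by
  have := hB.2 _ (h.isBlackSet hB.1)
  have := h.card_add_card
  omega

/-- Twice the number of edges joining two black vertices. -/
noncomputable def blackDegSum (G : SimpleGraph V) (B : Finset V) : ℕ :=
  ∑ v ∈ B, degIn G B v

variable [Fintype V]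

open Classical in
/-- The white vertices without black neighbour. -/
noncomputable def remote (G : SimpleGraph V) (B : Finset V) : Finset V :=
  {v | v ∉ B ∧ ∀ t, G.Adj v t → t ∉ B}

open Classical in
/-- The white vertices whose only black neighbour is not adjacent to a leaf. -/
noncomputable def deep (G : SimpleGraph V) (B : Finset V) : Finset V :=
  {v | v ∉ B ∧ degIn G B v = 1 ∧ ∀ x ∈ B, G.Adj v x → ∀ y, G.Adj x y → ¬ IsLeaf G B y}

@[grind =]
theorem mem_remote : v ∈ remote G B ↔ v ∉ B ∧ ∀ t, G.Adj v t → t ∉ B := by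
  simp [remote]

theorem mem_deep : v ∈ deep G B ↔ v ∉ B ∧ degIn G B v = 1 ∧
    ∀ x ∈ B, G.Adj v x → ∀ y, G.Adj x y → ¬ IsLeaf G B y := by
  simp [deep]

/-- The quantities minimised, in this order of priority, by the black set of the proof. -/
noncomputable def rank (G : SimpleGraph V) (B : Finset V) : ℕᵒᵈ ×ₗ ℕ ×ₗ ℕ ×ₗ ℕ :=
  toLex (.toDual #B, toLex (#(remote G B), toLex (blackDegSum G B, #(deep G B))))

/-- A black set of least rank. -/
def IsOptimal (G : SimpleGraph V) (B : Finset V) : Prop :=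
  IsBlackSet G B ∧ ∀ B', IsBlackSet G B' → rank G B ≤ rank G B'

theorem exists_isOptimal (G : SimpleGraph V) : ∃ B, IsOptimal G B := by
  classical
  obtain ⟨B, hB, hmin⟩ := exists_min_image {B | IsBlackSet G B} (rank G)
    ⟨∅, mem_filter.2 ⟨mem_univ _, fun _ h => absurd h (notMem_empty _)⟩⟩
  exact ⟨B, by simpa using hB, by simpa using hmin⟩

namespace IsOptimal

theorem isMaxBlackSet (hB : IsOptimal G B) : IsMaxBlackSet G B := by
  refine ⟨hB.1, fun B' hB' => ?_⟩
  have := hB.2 B' hB'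
  simp only [rank, Prod.Lex.toLex_le_toLex, OrderDual.toDual_lt_toDual,
    OrderDual.toDual_inj] at this
  omega

theorem remote_eq (hB : IsOptimal G B) (hB' : IsBlackSet G B') (hcard : #B ≤ #B')
    (hremote : remote G B' ⊆ remote G B) : remote G B' = remote G B := by
  refine eq_of_subset_of_card_le hremote ?_
  have := hB.2 B' hB'
  simp only [rank, Prod.Lex.toLex_le_toLex, OrderDual.toDual_lt_toDual,
    OrderDual.toDual_inj] at this
  omega

theorem blackDegSum_le (hB : IsOptimal G B) (hB' : IsBlackSet G B') (hcard : #B ≤ #B')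
    (hremote : remote G B' ⊆ remote G B) : blackDegSum G B ≤ blackDegSum G B' := by
  have := hB.2 B' hB'
  simp only [rank, Prod.Lex.toLex_le_toLex, OrderDual.toDual_lt_toDual, OrderDual.toDual_inj,
    hB.remote_eq hB' hcard hremote] at this
  omega

theorem card_deep_le (hB : IsOptimal G B) (hB' : IsBlackSet G B') (hcard : #B ≤ #B')
    (hremote : remote G B' ⊆ remote G B) (hdeg : blackDegSum G B' ≤ blackDegSum G B) :
    #(deep G B) ≤ #(deep G B') := by
  have := hB.2 B' hB'
  simp only [rank, Prod.Lex.toLex_le_toLex, OrderDual.toDual_lt_toDual, OrderDual.toDual_inj,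
    hB.remote_eq hB' hcard hremote] at this
  omega

open Classical in
theorem sum_removed_le (hB : IsOptimal G B) {R A : Finset V} (h : IsExchange G B R A)
    (hcard : #R ≤ #A) (hremote : remote G (exchange B R A) ⊆ remote G B) :
    ∑ r ∈ R, (degIn G (B \ R) r + degIn G B r) ≤
      ∑ a ∈ A, (degIn G (B \ R) a + degIn G (exchange B R A) a) := by
  have hB' := hB.blackDegSum_le (h.isBlackSet hB.1) (by have := h.card_add_card; omega) hremote
  have := h.sum_degIn_add
  simp only [blackDegSum] at hB'
  omega

end IsOptimal

end IsOptimal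

theorem IsMaxBlackSet.exists_isInner_adj {B : Finset V} {w u p : V} (hG : IsCubic G)
    (hB : IsMaxBlackSet G B) (hw : w ∉ B) (hu : u ∉ B) (hwu : G.Adj w u) (hp : p ∈ B)
    (hwp : G.Adj w p) : ∃ x, IsInner G B x ∧ G.Adj w x := by
  by_contra! hleaf
  have : IsExchange G B ∅ {w} :=
    { mem_of_mem_removed := by simp
      notMem_of_mem_added := by simpa
      added_black := by grind
      added_white := by grind [hwu.ne]
      kept_black := by simp
      kept_white := by
        intro a ha t ht _ hat
        obtain rfl := mem_singleton.1 ha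
        obtain ht' | ht' := hG.isLeaf_or_isInner hB.1 ht
        · obtain ⟨o, ho, hto, hne⟩ := hG.exists_white_adj_ne ht'.2.le a
          exact ⟨o, by grind, hto⟩
        · exact absurd hat (hleaf t ht') }
  simpa using hB.card_added_le this

/-- A vertex that becomes remote had only removed black neighbours; if there are at most two of
these and they are leaves, it could be added to `B`. -/
theorem IsMaxBlackSet.remote_exchange_subset [Fintype V] {B R A L : Finset V} (hG : IsCubic G)
    (hB : IsMaxBlackSet G B) (hL : ∀ y ∈ L, IsLeaf G B y) (hcard : #L ≤ 2)
    (hR : ∀ r ∈ R, ∃ s ∈ exchange B R A, G.Adj r s)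
    (hRL : ∀ r ∈ R, r ∈ L ∨ ∀ t ∉ B, G.Adj r t → t ∈ A) :
    remote G (exchange B R A) ⊆ remote G B := by
  intro t ht
  have htB : t ∉ B := by grind
  by_contra hrem
  obtain ⟨p, hp, htp⟩ : ∃ p ∈ B, G.Adj t p := by grind
  have hblack : ∀ s ∈ B, G.Adj t s → s ∈ L := by grind [G.adj_comm]
  obtain ⟨u, hu, htu⟩ : ∃ u ∉ B, G.Adj t u := by
    by_contra! hall
    obtain ⟨a, b, c, h⟩ := hG.exists_isNbhd t
    classical
    have : ({a, b, c} : Finset V) ⊆ L := by grind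
    have := card_le_card this
    rw [card_eq_three.2 ⟨a, b, c, h.ne₁₂, h.ne₁₃, h.ne₂₃, rfl⟩] at this
    omega
  obtain ⟨x, hx, htx⟩ := hB.exists_isInner_adj hG htB hu htu hp htp
  exact (hL x (hblack x hx.1 htx)).not_isInner hx

section Remote

variable [Fintype V] {B : Finset V} {v v' a x y z c : V}

theorem IsMaxBlackSet.not_adj_of_mem_remote (hG : IsCubic G) (hB : IsMaxBlackSet G B)
    (hv : v ∈ remote G B) (hv' : v' ∈ remote G B) : ¬ G.Adj v v' := by
  intro h
  classical
  rw [mem_remote] at hv hv'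
  obtain ⟨b, c, hb⟩ := hG.exists_isNbhd_of_adj h
  obtain ⟨b', c', hb'⟩ := hG.exists_isNbhd_of_adj h.symm
  have : IsExchange G B ∅ {v, v'} := by
    constructor <;> grind
  have := hB.card_added_le this
  grind [card_pair h.ne]

theorem not_isLeaf_of_adj_remote (hG : IsCubic G) (hB : IsMaxBlackSet G B) (hv : v ∈ remote G B)
    (ha : IsWhiteOneNbhd G B a x v c) (hx : IsInnerNbhd G B x y z a) : ¬ IsLeaf G B y := by
  intro hy
  classical
  rw [mem_remote] at hv
  obtain ⟨e, f, he⟩ := hG.exists_isNbhd_of_adj ha.adj₂.symm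
  have hyx (t : V) (ht : t ∈ B) (hyt : G.Adj y t) : t = x := hy.eq_of_adj ht hx.mem hyt hx.adj₁.symm
  have : IsExchange G B {y} {v, a} := by
    constructor <;> grind
  have := hB.card_added_le this
  grind [card_pair ha.adj₂.ne']

theorem not_isInner_of_adj_remote (hG : IsCubic G) (hB : IsMaxBlackSet G B) (hv : v ∈ remote G B)
    (ha : IsWhiteOneNbhd G B a x v c) (hx : IsInnerNbhd G B x y z a) (hy : IsInner G B y) :
    ¬ IsInner G B z := by
  intro hz
  classical
  rw [mem_remote] at hv
  obtain ⟨e, f, he⟩ := hG.exists_isNbhd_of_adj ha.adj₂.symm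
  obtain ⟨y', hy', hyy', hne⟩ := hy.exists_adj_ne x
  obtain ⟨z', hz', hzz', hne'⟩ := hz.exists_adj_ne x
  have : IsExchange G B {x} {v, a} := by
    constructor <;> grind
  have := hB.card_added_le this
  grind [card_pair ha.adj₂.ne']

theorem IsMaxBlackSet.not_isWhiteOneNbhd_remote (hG : IsCubic G) (hB : IsMaxBlackSet G B)
    (hv : v ∈ remote G B) : ¬ IsWhiteOneNbhd G B a x v c := by
  intro ha
  obtain ⟨x', hx, hax⟩ := hB.exists_isInner_adj hG ha.notMem ha.notMem₂ ha.adj₂ ha.mem₁ ha.adj₁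
  obtain rfl : x' = x := by grind [IsInner]
  obtain ⟨y, z, hx⟩ := hx.exists_isInnerNbhd hG ha.notMem hax.symm
  have hy := not_isLeaf_of_adj_remote hG hB hv ha hx
  have hz := not_isLeaf_of_adj_remote hG hB hv ha hx.swap
  have := not_isInner_of_adj_remote hG hB hv ha hx
  grind [hG.isLeaf_or_isInner hB.1]

end Remote

section WhiteTwo

variable [Fintype V] {B : Finset V} {a p q u y z : V}

theorem IsOptimal.not_isInner_of_isWhiteTwoNbhd (hG : IsCubic G) (hB : IsOptimal G B)
    (ha : IsWhiteTwoNbhd G B a p q u) (hp : IsInnerNbhd G B p y z a) (hq : IsLeaf G B q)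
    (hy : IsInner G B y) : ¬ IsInner G B z := by
  intro hz
  classical
  obtain ⟨y', hy', hyy', hyne⟩ := hy.exists_adj_ne p
  obtain ⟨z', hz', hzz', hzne⟩ := hz.exists_adj_ne p
  obtain ⟨o, ho, hqo, hone⟩ := hG.exists_white_adj_ne hq.2.le a
  have hex : IsExchange G B {p} {a} := by
    constructor <;> grind
  have hremote := hB.isMaxBlackSet.remote_exchange_subset (R := {p}) (A := {a}) (L := ∅) hG
    (by simp) (by simp) (by grind) (by grind)
  have := hB.sum_removed_le hex (by simp) hremote
  simp only [sum_singleton, hp.degIn_eq, ha.degIn_eq] at this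
  grind

theorem IsOptimal.not_isLeaf_of_isWhiteTwoNbhd_remote (hG : IsCubic G) (hB : IsOptimal G B)
    (ha : IsWhiteTwoNbhd G B a p q u) (hp : IsInnerNbhd G B p y z a) (hq : IsLeaf G B q)
    (hu : u ∈ remote G B) : ¬ IsLeaf G B y := by
  intro hy
  classical
  have hyp (t : V) (ht : t ∈ B) (hyt : G.Adj y t) : t = p := hy.eq_of_adj ht hp.mem hyt hp.adj₁.symm
  obtain ⟨o, ho, hqo, hone⟩ := hG.exists_white_adj_ne hq.2.le a
  have hex : IsExchange G B {y} {a} := by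
    constructor <;> grind
  have hremote := hB.isMaxBlackSet.remote_exchange_subset (R := {y}) (A := {a}) (L := {y}) hG
    (by simpa) (by simp) (by grind) (by grind)
  have := hB.remote_eq (hex.isBlackSet hB.1) (by have := hex.card_add_card; grind) hremote
  grind

end WhiteTwo

section Deep

variable {B : Finset V} {v x u w y z p w₂ y' z' : V}

theorem IsMaxBlackSet.not_isInnerNbhd_of_adj_deep (hG : IsCubic G) (hB : IsMaxBlackSet G B)
    (hv : IsWhiteOneNbhd G B v x u w) (hx : IsInnerNbhd G B x y z v) (hy : IsInner G B y)
    (hw : IsWhiteOneNbhd G B w p v w₂) : ¬ IsInnerNbhd G B p y z' w := by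
  intro hp
  classical
  obtain ⟨o, ho⟩ := hG.exists_isNbhd_of_adj_of_adj hx.adj₁.symm hp.adj₁.symm (by grind)
  have hoB : o ∉ B := by grind [ho.degIn_eq B, IsInner]
  have hex : IsExchange G B {y} {v, w} := by
    constructor <;> grind
  have := hB.card_added_le hex
  grind

variable [Fintype V]

theorem IsOptimal.not_isLeaf_of_adj_deep (hG : IsCubic G) (hB : IsOptimal G B)
    (hv : IsWhiteOneNbhd G B v x u w) (hx : IsInnerNbhd G B x y z v) (hy : IsInner G B y)
    (hz : IsInner G B z) (hw : IsWhiteOneNbhd G B w p v w₂) (hp : IsInnerNbhd G B p y' z' w) :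
    ¬ IsLeaf G B y' := by
  intro hy'
  classical
  have hyp (t : V) (ht : t ∈ B) (hyt : G.Adj y' t) : t = p :=
    hy'.eq_of_adj ht hp.mem hyt hp.adj₁.symm
  obtain ⟨b, c, hb⟩ := hG.exists_isNbhd_of_adj hp.adj₁.symm
  obtain ⟨s, hs, hys, hsne⟩ := hy.exists_adj_ne x
  obtain ⟨t, ht, hzt, htne⟩ := hz.exists_adj_ne x
  have hex : IsExchange G B {x, y'} {v, w} := by
    constructor <;> grind [G.adj_comm]
  have hremote := hB.isMaxBlackSet.remote_exchange_subset (R := {x, y'}) (A := {v, w}) (L := {y'})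
    hG (by simpa) (by simp) (by grind) (by grind)
  have := hB.sum_removed_le hex (by grind) hremote
  rw [sum_pair (by grind), sum_pair (by grind)] at this
  simp only [hv.degIn_eq, hw.degIn_eq, hx.degIn_eq, hb.degIn_eq] at this
  grind

theorem IsOptimal.not_isInner_of_adj_deep (hG : IsCubic G) (hB : IsOptimal G B)
    (hv : IsWhiteOneNbhd G B v x u w) (hx : IsInnerNbhd G B x y z v) (hy : IsInner G B y)
    (hz : IsInner G B z) (hw : IsWhiteOneNbhd G B w p v w₂) (hp : IsInnerNbhd G B p y' z' w)
    (hxp : ∀ t ∈ B, G.Adj x t → ¬ G.Adj p t) (hy' : IsInner G B y') : ¬ IsInner G B z' := by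
  intro hz'
  classical
  have hkept (t : V) (ht : IsInner G B t) (htxp : G.Adj t x ∨ G.Adj t p) :
      ∃ s ∈ B, G.Adj t s ∧ s ≠ x ∧ s ≠ p := by
    rcases htxp with htx | htp
    · obtain ⟨s, hs, hts, hsx⟩ := ht.exists_adj_ne x
      exact ⟨s, hs, hts, hsx, by grind [G.adj_comm, IsInner]⟩
    · obtain ⟨s, hs, hts, hsp⟩ := ht.exists_adj_ne p
      exact ⟨s, hs, hts, by grind [G.adj_comm, IsInner], hsp⟩
  have hex : IsExchange G B {x, p} {v, w} := by
    constructor <;> grind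
  have hremote := hB.isMaxBlackSet.remote_exchange_subset (R := {x, p}) (A := {v, w}) (L := ∅)
    hG (by simp) (by simp) (by grind) (by grind)
  have := hB.sum_removed_le hex (by grind) hremote
  rw [sum_pair (by grind), sum_pair (by grind)] at this
  simp only [hv.degIn_eq, hw.degIn_eq, hx.degIn_eq, hp.degIn_eq] at this
  grind

theorem IsOptimal.not_isWhiteOneNbhd_of_adj_deep (hG : IsCubic G) (hB : IsOptimal G B)
    (hv : IsWhiteOneNbhd G B v x u w) (hx : IsInnerNbhd G B x y z v) (hy : IsInner G B y)
    (hz : IsInner G B z) : ¬ IsWhiteOneNbhd G B w p v w₂ := by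
  intro hw
  obtain ⟨p', hp, hwp⟩ := hB.isMaxBlackSet.exists_isInner_adj hG hw.notMem hw.notMem₂ hw.adj₂
    hw.mem₁ hw.adj₁
  obtain rfl : p' = p := by grind [IsInner]
  obtain ⟨y', z', hp⟩ := hp.exists_isInnerNbhd hG hw.notMem hwp.symm
  have hy' := hB.not_isLeaf_of_adj_deep hG hv hx hy hz hw hp
  have hz' := hB.not_isLeaf_of_adj_deep hG hv hx hy hz hw hp.swap
  by_cases hxp : ∀ t ∈ B, G.Adj x t → ¬ G.Adj p' t
  · have := hB.not_isInner_of_adj_deep hG hv hx hy hz hw hp hxp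
    grind [hG.isLeaf_or_isInner hB.1]
  push Not at hxp
  obtain ⟨t, ht, hxt, hpt⟩ := hxp
  obtain ⟨_, hx'⟩ := hx.isInner.exists_isInnerNbhd_of_adj hG hv.notMem hx.adj₃ ht hxt
  obtain ⟨_, hp'⟩ := hp.isInner.exists_isInnerNbhd_of_adj hG hw.notMem hp.adj₃ ht hpt
  exact hB.isMaxBlackSet.not_isInnerNbhd_of_adj_deep hG hv hx' (by grind) hw hp'

end Deep

section LeafHub

variable {B : Finset V} {a t x c c' y z j p q u : V}

/-- A white vertex all of whose neighbours are leaves. -/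
@[grind]
def IsLeafHub (G : SimpleGraph V) (B : Finset V) (a : V) : Prop :=
  a ∉ B ∧ ∀ s, G.Adj a s → IsLeaf G B s

theorem IsMaxBlackSet.not_isLeafHub_of_isWhiteOneNbhd (hG : IsCubic G) (hB : IsMaxBlackSet G B)
    (ht : IsWhiteOneNbhd G B t x c c') (hx : IsInnerNbhd G B x y z t) (hay : G.Adj a y) :
    ¬ IsLeafHub G B a := by
  intro ha
  classical
  obtain ⟨s, s', hs⟩ := hG.exists_isNbhd_of_adj hay
  have hy := ha.2 y hay
  have hyx (i : V) (hi : i ∈ B) (hyi : G.Adj y i) : i = x := hy.eq_of_adj hi hx.mem hyi hx.adj₁.symm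
  have hkept (i : V) (hi : G.Adj a i) : ∃ o ∉ B, G.Adj i o ∧ o ≠ a ∧ o ≠ t := by
    obtain ⟨o, ho, hio, hne⟩ := hG.exists_white_adj_ne (ha.2 i hi).2.le a
    exact ⟨o, ho, hio, hne, by grind [G.adj_comm, IsLeaf, IsInner]⟩
  have hex : IsExchange G B {y} {t, a} := by
    constructor <;> grind [IsLeaf]
  have := hB.card_added_le hex
  grind

theorem IsMaxBlackSet.adj_of_isLeafHub (hG : IsCubic G) (hB : IsMaxBlackSet G B)
    (hj : IsWhiteTwoNbhd G B j p q u) (hp : IsInnerNbhd G B p y z j) (hq : IsLeaf G B q)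
    (ha : IsLeafHub G B a) (hay : G.Adj a y) : G.Adj q a ∧ q ≠ y := by
  by_contra hqa
  classical
  obtain ⟨s, s', hs⟩ := hG.exists_isNbhd_of_adj hay
  have hy := ha.2 y hay
  have hyp (i : V) (hi : i ∈ B) (hyi : G.Adj y i) : i = p := hy.eq_of_adj hi hp.mem hyi hp.adj₁.symm
  obtain ⟨o', ho', hqo, hone⟩ := hG.exists_white_adj_ne hq.2.le j
  have hkept (i : V) (hi : G.Adj a i) (hiy : i ≠ y) : ∃ o ∉ B, G.Adj i o ∧ o ≠ a ∧ o ≠ j := by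
    obtain ⟨o, ho, hio, hne⟩ := hG.exists_white_adj_ne (ha.2 i hi).2.le a
    exact ⟨o, ho, hio, hne, by grind [G.adj_comm, IsLeaf, IsInner]⟩
  have hex : IsExchange G B {y} {j, a} := by
    constructor <;> grind [IsLeaf]
  have := hB.card_added_le hex
  grind

end LeafHub

/-- A deep vertex `v` next to a white vertex `u` with black neighbours `p` and `q`, where the leaf
`l` beside `p` and the leaf `q` hang from a common leaf hub `a`. -/
structure HubConfig (G : SimpleGraph V) (B : Finset V) where
  (v x u w y z p q r l m a b s : V)
  nbhd_v : IsWhiteOneNbhd G B v x u w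
  nbhd_x : IsInnerNbhd G B x y z v
  isInner_y : IsInner G B y
  isInner_z : IsInner G B z
  nbhd_u : IsWhiteTwoNbhd G B u p q v
  nbhd_p : IsInnerNbhd G B p l m u
  nbhd_l : IsLeafNbhd G B l p a b
  isLeafHub_a : IsLeafHub G B a
  nbhd_a : IsNbhd G a l q s
  nbhd_q : IsLeafNbhd G B q r u a
  isInner_r : IsInner G B r

namespace HubConfig

variable {B : Finset V} {X Y τ t β : V}

attribute [grind! .] nbhd_v nbhd_x isInner_y isInner_z nbhd_u nbhd_p nbhd_l isLeafHub_a nbhd_a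
  nbhd_q isInner_r

theorem isLeaf_s (h : HubConfig G B) : IsLeaf G B h.s :=
  h.isLeafHub_a.2 h.s h.nbhd_a.adj₃

theorem exists_white_adj_s (hG : IsCubic G) (h : HubConfig G B) :
    ∃ o ∉ B, G.Adj h.s o ∧ o ≠ h.a ∧ o ≠ h.u ∧ o ≠ h.v := by
  obtain ⟨o, ho, hso, hne⟩ := hG.exists_white_adj_ne h.isLeaf_s.2.le h.a
  refine ⟨o, ho, hso, hne, ?_, ?_⟩ <;> grind [G.adj_comm, IsLeaf, IsInner]

theorem u_ne_a (h : HubConfig G B) : h.u ≠ h.a := by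
  grind [IsLeaf]

theorem v_ne_a (h : HubConfig G B) : h.v ≠ h.a := by
  grind [IsLeaf]

theorem w_ne_a (h : HubConfig G B) : h.w ≠ h.a := by
  grind [IsLeaf, G.adj_comm]

theorem isInner_of_adj_x (h : HubConfig G B) {t : V} (ht : t ∈ B) (hxt : G.Adj h.x t) :
    IsInner G B t := by
  grind

theorem ne_x_of_adj_s (h : HubConfig G B) (hst : G.Adj h.s t) : t ≠ h.x := by
  rintro rfl
  exact h.isLeaf_s.not_isInner (h.isInner_of_adj_x h.isLeaf_s.1 hst.symm)

theorem v_mem_deep [Fintype V] (h : HubConfig G B) : h.v ∈ deep G B := by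
  refine mem_deep.2 ⟨h.nbhd_v.notMem, by grind [h.nbhd_v.degIn_eq B], fun x hx hvx y hxy => ?_⟩
  grind [IsLeaf, IsInner]

open Classical in
theorem isExchange_of_not_adj_r_x (hG : IsCubic G) (h : HubConfig G B) (hrx : ¬ G.Adj h.r h.x) :
    IsExchange G B {h.l, h.x, h.q} {h.v, h.u, h.a} := by
  have hs := h.exists_white_adj_s hG
  have hlp (t : V) (ht : t ∈ B) (hlt : G.Adj h.l t) : t = h.p := by grind
  have hqr (t : V) (ht : t ∈ B) (hqt : G.Adj h.q t) : t = h.r := by grind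
  have hkept (t : V) (ht : t ∈ B) (htx : G.Adj t h.x) (htp : t ≠ h.p) :
      ∃ t' ∈ B, G.Adj t t' ∧ t' ≠ h.x ∧ t' ≠ h.l ∧ t' ≠ h.q := by
    obtain ⟨t', ht', htt, hne⟩ := (h.isInner_of_adj_x ht htx.symm).exists_adj_ne h.x
    exact ⟨t', ht', htt, hne, by grind [G.adj_comm], by grind [G.adj_comm]⟩
  obtain ⟨r', hr', hrr, hrq⟩ := h.isInner_r.exists_adj_ne h.q
  have hrl' : r' = h.l → h.r = h.p := by grind [G.adj_comm]
  constructor <;> grind [G.adj_comm, IsLeaf, IsInner]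

theorem adj_r_x [Fintype V] (hG : IsCubic G) (hB : IsOptimal G B) (h : HubConfig G B) :
    G.Adj h.r h.x := by
  by_contra hrx
  classical
  have hwa := h.w_ne_a
  have hxr : h.r ≠ h.x := by
    grind [h.isInner_of_adj_x h.nbhd_q.mem, IsLeaf.not_isInner, G.adj_comm]
  obtain ⟨R, hR⟩ : ∃ R : Finset V, R = {h.l, h.x, h.q} := ⟨_, rfl⟩
  obtain ⟨A, hA⟩ : ∃ A : Finset V, A = {h.v, h.u, h.a} := ⟨_, rfl⟩
  have hex : IsExchange G B R A := by simpa only [hR, hA] using h.isExchange_of_not_adj_r_x hG hrx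
  have hremote := hB.isMaxBlackSet.remote_exchange_subset (R := R) (A := A) (L := {h.l, h.q}) hG
    (by grind) card_le_two (by grind) (by grind)
  have hdeg := hB.sum_removed_le hex (by grind) hremote
  rw [hR, sum_insert (by grind), sum_pair (by grind), ← hR,
    hA, sum_insert (by grind), sum_pair (by grind), ← hA] at hdeg
  have hdl : 2 ≤ degIn G (B \ R) h.l + degIn G B h.l := by grind [h.nbhd_l.degIn_eq]
  have hdx : 4 ≤ degIn G (B \ R) h.x + degIn G B h.x := by
    grind [h.nbhd_x.degIn_eq, IsLeaf.not_isInner]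
  have hdq : 2 ≤ degIn G (B \ R) h.q + degIn G B h.q := by
    grind [h.nbhd_q.degIn_eq, IsLeaf.not_isInner]
  have hdv : degIn G (B \ R) h.v + degIn G (exchange B R A) h.v ≤ 1 := by
    grind [h.nbhd_v.degIn_eq]
  have hdu : degIn G (B \ R) h.u + degIn G (exchange B R A) h.u ≤ 3 := by
    grind [h.nbhd_u.degIn_eq]
  have hda : degIn G (B \ R) h.a + degIn G (exchange B R A) h.a ≤ 2 := by
    grind [h.nbhd_a.degIn_eq]
  omega

theorem not_adj_p_x (hG : IsCubic G) (hB : IsMaxBlackSet G B) (h : HubConfig G B)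
    (hrx : G.Adj h.r h.x) : ¬ G.Adj h.p h.x := by
  intro hpx
  classical
  have hs := h.exists_white_adj_s hG
  have hex : IsExchange G B {h.p, h.q} {h.v, h.u, h.a} := by
    constructor <;> grind [G.adj_comm, IsLeaf, IsInner]
  have := hB.card_added_le hex
  grind

theorem exists_isNbhd_r (hG : IsCubic G) (h : HubConfig G B) (hrx : G.Adj h.r h.x) :
    ∃ c ∉ B, IsNbhd G h.r h.x h.q c := by
  obtain ⟨c, hc⟩ := hG.exists_isNbhd_of_adj_of_adj hrx h.nbhd_q.adj₁.symm
    (by grind [h.nbhd_q.isLeaf.not_isInner, h.nbhd_x.isInner])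
  refine ⟨c, ?_, hc⟩
  grind [hc.degIn_eq B, IsInner]

open Classical in
theorem exists_adj_removed_of_isWhiteTwoNbhd_b (h : HubConfig G B) (hrx : G.Adj h.r h.x)
    (hst : G.Adj h.s t) (hb : IsWhiteTwoNbhd G B h.b h.l t β) :
    ∀ d ∈ ({h.v, h.u, h.a, h.b} : Finset V), ∀ i ∈ B, i ∉ ({h.r, h.p, h.s} : Finset V) →
      G.Adj d i → ∃ k ∈ ({h.r, h.p, h.s} : Finset V), G.Adj i k := by
  intro d hd i hi hiR hdi
  have hi' : i = h.x ∨ i = h.q ∨ i = h.l ∨ i = t := by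
    simp only [mem_insert, mem_singleton] at hd hiR
    rcases hd with rfl | rfl | rfl | rfl <;> grind
  rcases hi' with rfl | rfl | rfl | rfl
  · exact ⟨h.r, by simp, hrx.symm⟩
  · exact ⟨h.r, by simp, h.nbhd_q.adj₁⟩
  · exact ⟨h.p, by simp, h.nbhd_l.adj₁⟩
  · exact ⟨h.s, by simp, hst.symm⟩

open Classical in
theorem isExchange_of_isWhiteTwoNbhd_b (hG : IsCubic G) (h : HubConfig G B)
    (hrx : G.Adj h.r h.x) (hpx : ¬ G.Adj h.p h.x) (hm : IsInner G B h.m)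
    (hst : G.Adj h.s t) (ht : IsInner G B t) (hbw : h.b ≠ h.w)
    (hb : IsWhiteTwoNbhd G B h.b h.l t β) :
    IsExchange G B {h.r, h.p, h.s} {h.v, h.u, h.a, h.b} := by
  obtain ⟨c, hc, hr⟩ := h.exists_isNbhd_r hG hrx
  have hs := h.isLeaf_s
  have hp := h.nbhd_p.isInner
  have hβ : β ≠ h.v ∧ β ≠ h.u ∧ β ≠ h.a := by grind [IsLeaf, G.adj_comm]
  have hst' (i : V) (hi : i ∈ B) (hsi : G.Adj h.s i) : i = t := hs.eq_of_adj hi ht.1 hsi hst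
  obtain ⟨m', hm', hmm, hmp⟩ := hm.exists_adj_ne h.p
  have hRB : ∀ k ∈ ({h.r, h.p, h.s} : Finset V), k ∈ B := by
    simpa using ⟨h.isInner_r.1, hp.1, hs.1⟩
  have hAB : ∀ k ∈ ({h.v, h.u, h.a, h.b} : Finset V), k ∉ B := by
    simpa using ⟨h.nbhd_v.notMem, h.nbhd_u.notMem, h.isLeafHub_a.1, hb.notMem⟩
  refine ⟨hRB, hAB, ?_, ?_, by grind [G.adj_comm], ?_⟩
  · simp only [mem_insert, mem_singleton, forall_eq_or_imp, forall_eq]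
    exact ⟨⟨h.u, by simp, h.nbhd_v.adj₂⟩, ⟨h.v, by simp, h.nbhd_u.adj₃⟩,
      ⟨h.l, by grind, h.nbhd_a.adj₁⟩, ⟨h.l, by grind, hb.adj₁⟩⟩
  · simp only [mem_insert, mem_singleton, forall_eq_or_imp, forall_eq]
    exact ⟨⟨h.w, by grind, h.nbhd_v.adj₃⟩, ⟨h.p, by grind, h.nbhd_u.adj₁⟩,
      ⟨h.s, by grind, h.nbhd_a.adj₃⟩, ⟨β, by grind, hb.adj₃⟩⟩
  · intro d hd i hi hiR hdi
    obtain ⟨k, hk, hik⟩ := h.exists_adj_removed_of_isWhiteTwoNbhd_b hrx hst hb d hd i hi hiR hdi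
    exact ⟨k, by grind only [= mem_exchange], hik⟩

theorem not_isWhiteTwoNbhd_b (hG : IsCubic G) (hB : IsMaxBlackSet G B) (h : HubConfig G B)
    (hrx : G.Adj h.r h.x) (hpx : ¬ G.Adj h.p h.x) (hm : IsInner G B h.m)
    (hst : G.Adj h.s t) (ht : IsInner G B t) (hbw : h.b ≠ h.w) :
    ¬ IsWhiteTwoNbhd G B h.b h.l t β := by
  intro hb
  classical
  have := hB.card_added_le (h.isExchange_of_isWhiteTwoNbhd_b hG hrx hpx hm hst ht hbw hb)
  grind [h.u_ne_a, h.v_ne_a, h.nbhd_l.isLeaf.not_isInner, h.nbhd_x.isInner]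

open Classical in
theorem isExchange_of_isWhiteTwoNbhd_w (h : HubConfig G B) (hpx : ¬ G.Adj h.p h.x)
    (hst : G.Adj h.s t) (ht : IsInner G B t)
    (hw : IsWhiteTwoNbhd G B h.w h.l t h.v) :
    IsExchange G B {h.x, h.l, h.s} {h.v, h.a, h.w} := by
  have hs := h.isLeaf_s
  have htx := h.ne_x_of_adj_s hst
  have hst' (i : V) (hi : i ∈ B) (hsi : G.Adj h.s i) : i = t := hs.eq_of_adj hi ht.1 hsi hst
  have hlp (i : V) (hi : i ∈ B) (hli : G.Adj h.l i) : i = h.p := by grind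
  have hkept (i : V) (hi : i ∈ B) (hxi : G.Adj h.x i) (hit : i ≠ t) :
      ∃ o ∈ B, G.Adj i o ∧ o ≠ h.x ∧ o ≠ h.l ∧ o ≠ h.s := by
    obtain ⟨o, ho, hio, hox⟩ := (h.isInner_of_adj_x hi hxi).exists_adj_ne h.x
    exact ⟨o, ho, hio, hox, by grind [G.adj_comm], by grind [G.adj_comm]⟩
  have hblack : ∀ k ∈ ({h.x, h.l, h.s} : Finset V), ∀ i ∈ B, i ∉ ({h.x, h.l, h.s} : Finset V) →
      G.Adj k i → ∃ o ∈ exchange B {h.x, h.l, h.s} {h.v, h.a, h.w}, G.Adj i o := by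
    intro k hk i hi _ hki
    by_cases hit : i = t
    · exact ⟨h.w, by simp, hit ▸ hw.adj₂.symm⟩
    simp only [mem_insert, mem_singleton] at hk
    rcases hk with rfl | rfl | rfl
    · obtain ⟨o, ho, hio, hox, hol, hos⟩ := hkept i hi hki hit
      exact ⟨o, by simp [*], hio⟩
    · obtain rfl := hlp i hi hki
      exact ⟨h.m, by grind, h.nbhd_p.adj₂⟩
    · exact absurd (hst' i hi hki) hit
  refine ⟨?_, ?_, ?_, ?_, hblack, ?_⟩ <;> grind [G.adj_comm, IsLeaf]

theorem not_isWhiteTwoNbhd_w [Fintype V] (hG : IsCubic G) (hB : IsOptimal G B) (h : HubConfig G B)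
    (hpx : ¬ G.Adj h.p h.x) (hst : G.Adj h.s t)
    (ht : IsInner G B t) : ¬ IsWhiteTwoNbhd G B h.w h.l t h.v := by
  intro hw
  classical
  have hs := h.isLeaf_s
  have hs' := hs.not_isInner
  have htx := h.ne_x_of_adj_s hst
  obtain ⟨o, hs_nbhd⟩ := hs.exists_isLeafNbhd hG ht.1 h.isLeafHub_a.1 hst h.nbhd_a.adj₃.symm
  obtain ⟨R, hR⟩ : ∃ R : Finset V, R = {h.x, h.l, h.s} := ⟨_, rfl⟩
  obtain ⟨A, hA⟩ : ∃ A : Finset V, A = {h.v, h.a, h.w} := ⟨_, rfl⟩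
  have hex : IsExchange G B R A := by
    simpa only [hR, hA] using h.isExchange_of_isWhiteTwoNbhd_w hpx hst ht hw
  have hremote := hB.isMaxBlackSet.remote_exchange_subset (R := R) (A := A) (L := {h.l, h.s}) hG
    (by grind) card_le_two (by grind) (by grind)
  have hdeg := hB.sum_removed_le hex (by grind) hremote
  rw [hR, sum_insert (by grind), sum_pair (by grind), ← hR,
    hA, sum_insert (by grind), sum_pair (by grind), ← hA] at hdeg
  have hdx : 4 ≤ degIn G (B \ R) h.x + degIn G B h.x := by grind [h.nbhd_x.degIn_eq]
  have hdl : 2 ≤ degIn G (B \ R) h.l + degIn G B h.l := by grind [h.nbhd_l.degIn_eq]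
  have hds : 2 ≤ degIn G (B \ R) h.s + degIn G B h.s := by grind [hs_nbhd.degIn_eq]
  have hdv : degIn G (B \ R) h.v + degIn G (exchange B R A) h.v ≤ 1 := by
    grind [h.nbhd_v.degIn_eq]
  have hda : degIn G (B \ R) h.a + degIn G (exchange B R A) h.a ≤ 2 := by
    grind [h.nbhd_a.degIn_eq]
  have hdw : degIn G (B \ R) h.w + degIn G (exchange B R A) h.w ≤ 4 := by
    grind [hw.degIn_eq]
  omega

open Classical in
/-- The vertices that are black after recolouring `q` and `l` white and `u` and `a` black. -/
noncomputable def swapped (h : HubConfig G B) : Finset V :=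
  exchange B {h.q, h.l} {h.u, h.a}

@[grind =]
theorem mem_swapped (h : HubConfig G B) :
    τ ∈ h.swapped ↔ τ ∈ B ∧ τ ≠ h.q ∧ τ ≠ h.l ∨ τ = h.u ∨ τ = h.a := by
  simp [swapped]

open Classical in
theorem isExchange_swapped (hG : IsCubic G) (h : HubConfig G B) :
    IsExchange G B {h.q, h.l} {h.u, h.a} := by
  have hs := h.isLeafHub_a.2 h.s (by grind)
  obtain ⟨o, ho, hso, hoa, hou, -⟩ := h.exists_white_adj_s hG
  obtain ⟨r', hr', hrr, hrq⟩ := h.isInner_r.exists_adj_ne h.q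
  have hs' := hs.1
  constructor <;> grind [G.adj_comm]

theorem blackDegSum_swapped_le (hG : IsCubic G) (h : HubConfig G B) :
    blackDegSum G h.swapped ≤ blackDegSum G B := by
  classical
  have hua := h.u_ne_a
  obtain ⟨R, hR⟩ : ∃ R : Finset V, R = {h.q, h.l} := ⟨_, rfl⟩
  obtain ⟨A, hA⟩ : ∃ A : Finset V, A = {h.u, h.a} := ⟨_, rfl⟩
  have hdeg := (h.isExchange_swapped hG).sum_degIn_add
  rw [sum_pair (by grind), sum_pair hua, ← hR, ← hA] at hdeg
  have hdq : 2 ≤ degIn G (B \ R) h.q + degIn G B h.q := by grind [h.nbhd_q.degIn_eq]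
  have hdl : 2 ≤ degIn G (B \ R) h.l + degIn G B h.l := by grind [h.nbhd_l.degIn_eq]
  have hdu : degIn G (B \ R) h.u + degIn G (exchange B R A) h.u ≤ 2 := by
    grind [h.nbhd_u.degIn_eq]
  have hda : degIn G (B \ R) h.a + degIn G (exchange B R A) h.a ≤ 2 := by
    grind [h.nbhd_a.degIn_eq]
  rw [blackDegSum, blackDegSum, swapped, ← hR, ← hA]
  omega

theorem isMaxBlackSet_swapped (hG : IsCubic G) (hB : IsMaxBlackSet G B) (h : HubConfig G B) :
    IsMaxBlackSet G h.swapped := by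
  classical
  have hex := h.isExchange_swapped hG
  have hcard := hex.card_add_card
  rw [card_pair (by grind), card_pair h.u_ne_a, Nat.add_right_cancel_iff] at hcard
  exact ⟨hex.isBlackSet hB.1, fun C hC => (hB.2 C hC).trans_eq hcard.symm⟩

theorem eq_s_of_isLeaf (h : HubConfig G B) (hX : X ∈ B) (hXY : G.Adj X Y)
    (hY : IsLeaf G B Y) (hY' : IsInner G h.swapped Y) : Y = h.s := by
  obtain ⟨r, hr, hYr, hrX⟩ := hY'.exists_adj_ne X
  have hrB : r ∈ B → r = X := fun hrB => hY.eq_of_adj hrB hX hYr hXY.symm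
  have hp := h.nbhd_p.isInner
  grind [G.adj_comm, IsLeaf, IsInner]

variable [Fintype V]

theorem remote_swapped_subset (hG : IsCubic G) (hB : IsMaxBlackSet G B) (h : HubConfig G B) :
    remote G h.swapped ⊆ remote G B := by
  classical
  refine hB.remote_exchange_subset (L := {h.q, h.l}) hG ?_ card_le_two ?_ ?_
  · simpa using ⟨h.nbhd_q.isLeaf, h.nbhd_l.isLeaf⟩
  · simpa using ⟨⟨h.u, by simp, h.nbhd_q.adj₂⟩, h.a, by simp, h.nbhd_l.adj₂⟩
  · grind

theorem v_notMem_deep_swapped (h : HubConfig G B) : h.v ∉ deep G h.swapped := by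
  intro hv
  have := eq_of_degIn_le_one (mem_deep.1 hv).2.1.le (by grind : h.x ∈ h.swapped)
    (by grind : h.u ∈ h.swapped) h.nbhd_v.adj₁ h.nbhd_v.adj₂
  grind

theorem not_adj_of_mem_deep_swapped (h : HubConfig G B) (hτ : τ ∈ deep G h.swapped) :
    τ ∉ B ∧ ¬ G.Adj τ h.q ∧ ¬ G.Adj τ h.u ∧ ¬ G.Adj τ h.a := by
  have hτv : τ ≠ h.v := by
    rintro rfl
    exact h.v_notMem_deep_swapped hτ
  obtain ⟨hτ', hdeg, -⟩ := mem_deep.1 hτ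
  have huniq (i j : V) (hi : i ∈ h.swapped) (hj : j ∈ h.swapped) (hτi : G.Adj τ i)
      (hτj : G.Adj τ j) : i = j := eq_of_degIn_le_one hdeg.le hi hj hτi hτj
  have hτq : τ ≠ h.q := by
    rintro rfl
    exact h.u_ne_a (huniq _ _ (by grind) (by grind) h.nbhd_q.adj₂ h.nbhd_q.adj₃)
  have hτl : τ ≠ h.l := by
    rintro rfl
    exact absurd (huniq h.p h.a (by grind) (by grind) h.nbhd_l.adj₁ h.nbhd_l.adj₂) (by grind)
  refine ⟨by grind, ?_, ?_, ?_⟩ <;> grind [G.adj_comm, IsLeaf]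

theorem exists_isInner_adj_of_mem_deep_swapped (hG : IsCubic G) (hB : IsMaxBlackSet G B)
    (h : HubConfig G B) (hτ : τ ∈ deep G h.swapped) :
    ∃ X ∈ h.swapped, IsInner G h.swapped X ∧ IsInner G B X ∧
      ∃ o o', IsNbhd G τ X o o' ∧ o ∉ B ∧ (o' ∈ B → o' = h.l) := by
  obtain ⟨hτB, hτq, hτu, hτa⟩ := h.not_adj_of_mem_deep_swapped hτ
  obtain ⟨hτ', hdeg, -⟩ := mem_deep.1 hτ
  have huniq (i j : V) (hi : i ∈ h.swapped) (hj : j ∈ h.swapped) (hτi : G.Adj τ i)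
      (hτj : G.Adj τ j) : i = j := eq_of_degIn_le_one hdeg.le hi hj hτi hτj
  obtain ⟨o, ho, hτo, hol⟩ := hG.exists_white_adj_ne hdeg.le h.l
  have hoB : o ∉ B := by grind
  obtain ⟨X₀, hX₀, hτX₀⟩ := degIn_pos.1 (hdeg ▸ one_pos)
  obtain ⟨X, hX', hτX⟩ :=
    (h.isMaxBlackSet_swapped hG hB).exists_isInner_adj hG hτ' ho hτo hX₀ hτX₀
  obtain ⟨X₁, hX₁, hτX₁⟩ := hB.exists_isInner_adj hG hτB hoB hτo
    (by grind [hX'.1] : X ∈ B) hτX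
  have hl := h.nbhd_l.isLeaf.not_isInner
  obtain rfl : X₁ = X := huniq X₁ X (by grind [hX₁.1]) hX'.1 hτX₁ hτX
  obtain ⟨o', hτ_nbhd⟩ := hG.exists_isNbhd_of_adj_of_adj hτX hτo (by grind [hX₁.1])
  refine ⟨X₁, hX'.1, hX', hX₁, o, o', hτ_nbhd, hoB, fun ho' => ?_⟩
  by_contra hne
  exact hτ_nbhd.ne₁₃ (huniq X₁ o' hX'.1 (by grind) hτX hτ_nbhd.adj₃)

theorem eq_s_of_mem_deep_swapped (hG : IsCubic G) (hB : IsMaxBlackSet G B)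
    (h : HubConfig G B) (hτ : τ ∈ deep G h.swapped) (hX' : IsInner G h.swapped X)
    (hX : IsInner G B X) (hτX : G.Adj τ X) (hXY : G.Adj X Y) (hY : IsLeaf G B Y) : Y = h.s := by
  obtain ⟨hτ', -, hdeep⟩ := mem_deep.1 hτ
  obtain ⟨y, z, hX_nbhd⟩ := hX.exists_isInnerNbhd hG (h.not_adj_of_mem_deep_swapped hτ).1 hτX.symm
  have hY' : Y ∈ h.swapped := by grind [hX_nbhd.degIn_eq h.swapped, IsInner, IsLeaf]
  refine h.eq_s_of_isLeaf hX.1 hXY hY ?_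
  exact (hG.isLeaf_or_isInner (h.isMaxBlackSet_swapped hG hB).1 hY').resolve_left
    (hdeep X hX'.1 hτX Y hXY)

/-- If the conclusion fails, then recolouring `q`, `l`, `u` and `a` removes `v` from the deep
vertices without creating a new one. -/
theorem exists_isWhiteTwoNbhd_b (hG : IsCubic G) (hB : IsOptimal G B) (h : HubConfig G B) :
    ∃ t β, G.Adj h.s t ∧ IsInner G B t ∧ IsWhiteTwoNbhd G B h.b h.l t β := by
  have hmax := hB.isMaxBlackSet
  by_contra! hcon
  suffices deep G h.swapped ⊆ deep G B by
    have hlt := card_lt_card (ssubset_of_subset_of_ne this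
      fun heq => h.v_notMem_deep_swapped (heq ▸ h.v_mem_deep))
    have hmax' := h.isMaxBlackSet_swapped hG hmax
    exact hlt.not_ge (hB.card_deep_le hmax'.1 (hmax'.2 B hB.1) (h.remote_swapped_subset hG hmax)
      (h.blackDegSum_swapped_le hG))
  intro τ hτ
  obtain ⟨hτB, -, -, hτa⟩ := h.not_adj_of_mem_deep_swapped hτ
  obtain ⟨X, -, hX', hX, o, o', hτ_nbhd, ho, ho'⟩ :=
    h.exists_isInner_adj_of_mem_deep_swapped hG hmax hτ
  have hs (t : V) (hXt : G.Adj X t) (ht : IsLeaf G B t) : t = h.s :=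
    h.eq_s_of_mem_deep_swapped hG hmax hτ hX' hX hτ_nbhd.adj₁ hXt ht
  obtain ⟨y, z, hX_nbhd⟩ := hX.exists_isInnerNbhd hG hτB hτ_nbhd.adj₁.symm
  have hy := hG.isLeaf_or_isInner hB.1 hX_nbhd.mem₁
  have hz := hG.isLeaf_or_isInner hB.1 hX_nbhd.mem₂
  by_cases hτl : G.Adj τ h.l
  · obtain rfl : τ = h.b := by grind [hτl.symm]
    have hb : IsWhiteTwoNbhd G B h.b h.l X o := by grind [IsWhiteTwoNbhd.mk, IsNbhd.mk]
    have hsX : G.Adj h.s X := by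
      by_contra hsX
      have := hB.not_isInner_of_isWhiteTwoNbhd hG hb.swap hX_nbhd h.nbhd_l.isLeaf
      grind [G.adj_comm]
    exact absurd hb (hcon X o hsX hX)
  · have hτ_one : IsWhiteOneNbhd G B τ X o o' :=
      ⟨hτ_nbhd, hτB, hX.1, ho, by grind⟩
    have hleaf (t : V) (hXt : G.Adj X t) : ¬ IsLeaf G B t := by
      intro ht
      obtain rfl := hs t hXt ht
      obtain ⟨z', hX_nbhd'⟩ := hX.exists_isInnerNbhd_of_adj hG hτB hτ_nbhd.adj₁.symm ht.1 hXt
      exact hmax.not_isLeafHub_of_isWhiteOneNbhd hG hτ_one hX_nbhd' h.nbhd_a.adj₃ h.isLeafHub_a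
    refine mem_deep.2 ⟨hτB, by grind [hτ_one.degIn_eq B], fun X₁ hX₁ hτX₁ t hXt => ?_⟩
    obtain rfl : X₁ = X := by grind
    exact hleaf t hXt

theorem false_of_isLeafHub_adj_m (hG : IsCubic G) (hB : IsOptimal G B) (h : HubConfig G B)
    (hm : IsLeaf G B h.m → ∃ a', IsLeafHub G B a' ∧ G.Adj a' h.m) : False := by
  have hrx := h.adj_r_x hG hB
  have hpx := h.not_adj_p_x hG hB.isMaxBlackSet hrx
  obtain ⟨t, β, hst, ht, hb⟩ := h.exists_isWhiteTwoNbhd_b hG hB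
  have hp := h.nbhd_p.isInner
  have hm' : IsInner G B h.m := by
    refine (hG.isLeaf_or_isInner hB.1 h.nbhd_p.mem₂).resolve_left fun hleaf => ?_
    obtain ⟨a', ha', ham⟩ := hm hleaf
    obtain ⟨hqa, hqm⟩ := hB.isMaxBlackSet.adj_of_isLeafHub hG h.nbhd_u h.nbhd_p.swap
      h.nbhd_q.isLeaf ha' ham
    have hms : h.m = h.s := by grind
    obtain rfl : t = h.p := hleaf.eq_of_adj ht.1 hp.1 (hms ▸ hst) h.nbhd_p.adj₂.symm
    grind
  by_cases hbw : h.b = h.w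
  · obtain rfl : β = h.v := by grind
    exact h.not_isWhiteTwoNbhd_w hG hB hpx hst ht (hbw ▸ hb)
  · exact h.not_isWhiteTwoNbhd_b hG hB.isMaxBlackSet hrx hpx hm' hst ht hbw hb

end HubConfig

section Classes

variable {B : Finset V} {t v : V}

open Classical in
/-- The inner black vertices. -/
noncomputable def inner (G : SimpleGraph V) (B : Finset V) : Finset V :=
  {x ∈ B | IsInner G B x}

theorem mem_inner : t ∈ inner G B ↔ IsInner G B t := by
  simpa [inner] using fun h => h.1

theorem inner_subset : inner G B ⊆ B :=
  fun _ h => (mem_inner.1 h).1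

theorem degIn_inner_le (t : V) : degIn G (inner G B) t ≤ degIn G B t :=
  degIn_mono inner_subset t

variable [Fintype V]

open Classical in
/-- The white vertices with two black neighbours, exactly one of which is inner. -/
noncomputable def weak (G : SimpleGraph V) (B : Finset V) : Finset V :=
  {t | t ∉ B ∧ degIn G B t = 2 ∧ degIn G (inner G B) t = 1}

open Classical in
/-- The white vertices with two black neighbours, both of which are inner. -/
noncomputable def strong (G : SimpleGraph V) (B : Finset V) : Finset V :=
  {t | t ∉ B ∧ degIn G B t = 2 ∧ degIn G (inner G B) t = 2}

open Classical in
/-- The white vertices with one black neighbour, which is adjacent to a leaf. -/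
noncomputable def shallow (G : SimpleGraph V) (B : Finset V) : Finset V :=
  {t | t ∉ B ∧ degIn G B t = 1 ∧ t ∉ deep G B}

open Classical in
/-- The white vertices with three black neighbours, at least one of which is inner. -/
noncomputable def mixedHubs (G : SimpleGraph V) (B : Finset V) : Finset V :=
  {t | t ∉ B ∧ degIn G B t = 3 ∧ 0 < degIn G (inner G B) t}

open Classical in
/-- The white vertices all of whose neighbours are leaves. -/
noncomputable def leafHubs (G : SimpleGraph V) (B : Finset V) : Finset V :=
  {t | IsLeafHub G B t}

open Classical in
/-- The deep vertices all of whose white neighbours are weak. -/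
noncomputable def weakDeep (G : SimpleGraph V) (B : Finset V) : Finset V :=
  {v ∈ deep G B | ∀ u ∉ B, G.Adj v u → u ∈ weak G B}

theorem mem_weak : t ∈ weak G B ↔ t ∉ B ∧ degIn G B t = 2 ∧ degIn G (inner G B) t = 1 := by
  simp [weak]

theorem mem_strong : t ∈ strong G B ↔ t ∉ B ∧ degIn G B t = 2 ∧ degIn G (inner G B) t = 2 := by
  simp [strong]

theorem mem_shallow : t ∈ shallow G B ↔ t ∉ B ∧ degIn G B t = 1 ∧ t ∉ deep G B := by
  simp [shallow]

theorem mem_mixedHubs :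
    t ∈ mixedHubs G B ↔ t ∉ B ∧ degIn G B t = 3 ∧ 0 < degIn G (inner G B) t := by
  simp [mixedHubs]

theorem mem_leafHubs : t ∈ leafHubs G B ↔ IsLeafHub G B t := by
  simp [leafHubs]

theorem mem_weakDeep :
    v ∈ weakDeep G B ↔ v ∈ deep G B ∧ ∀ u ∉ B, G.Adj v u → u ∈ weak G B := by
  simp [weakDeep]

theorem mem_remote_iff_degIn_eq_zero : t ∈ remote G B ↔ t ∉ B ∧ degIn G B t = 0 := by
  have := degIn_pos (G := G) (S := B) (v := t)
  grind

variable [DecidableEq V]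

theorem remote_subset_compl : remote G B ⊆ Bᶜ :=
  fun _ ht => mem_compl.2 (mem_remote.1 ht).1

theorem deep_subset_compl : deep G B ⊆ Bᶜ :=
  fun _ ht => mem_compl.2 (mem_deep.1 ht).1

theorem weak_subset_compl : weak G B ⊆ Bᶜ :=
  fun _ ht => mem_compl.2 (mem_weak.1 ht).1

theorem strong_subset_compl : strong G B ⊆ Bᶜ :=
  fun _ ht => mem_compl.2 (mem_strong.1 ht).1

theorem shallow_subset_compl : shallow G B ⊆ Bᶜ :=
  fun _ ht => mem_compl.2 (mem_shallow.1 ht).1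

theorem mixedHubs_subset_compl : mixedHubs G B ⊆ Bᶜ :=
  fun _ ht => mem_compl.2 (mem_mixedHubs.1 ht).1

end Classes

section Neighbourhoods

variable {B : Finset V} {t v u j y : V}

theorem IsMaxBlackSet.degIn_inner_pos (hG : IsCubic G) (hB : IsMaxBlackSet G B) (ht : t ∉ B)
    (h₁ : 1 ≤ degIn G B t) (h₂ : degIn G B t ≤ 2) : 0 < degIn G (inner G B) t := by
  obtain ⟨a, b, c, hN⟩ := hG.exists_isNbhd t
  have := hN.degIn_eq B
  obtain ⟨p, hp, htp⟩ := degIn_pos.1 h₁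
  obtain ⟨o, ho, hto⟩ : ∃ o ∉ B, G.Adj t o := by grind
  obtain ⟨x, hx, htx⟩ := hB.exists_isInner_adj hG ht ho hto hp htp
  exact degIn_pos.2 ⟨x, mem_inner.2 hx, htx⟩

theorem IsMaxBlackSet.exists_isWhiteOneNbhd (hG : IsCubic G) (hB : IsMaxBlackSet G B) (hv : v ∉ B)
    (h : degIn G B v = 1) (hu : u ∉ B) (hvu : G.Adj v u) :
    ∃ x w, IsWhiteOneNbhd G B v x u w ∧ IsInner G B x := by
  obtain ⟨x, hx, hvx⟩ := degIn_pos.1 (hB.degIn_inner_pos hG hv h.ge (by omega))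
  rw [mem_inner] at hx
  obtain ⟨w, hN⟩ := hG.exists_isNbhd_of_adj_of_adj hvx hvu (by grind [IsInner])
  have := hN.degIn_eq B
  exact ⟨x, w, ⟨hN, hv, hx.1, hu, by grind [IsInner]⟩, hx⟩

variable [Fintype V]

theorem IsMaxBlackSet.mem_weak_or_mem_strong (hG : IsCubic G) (hB : IsMaxBlackSet G B)
    (ht : t ∉ B) (h : degIn G B t = 2) : t ∈ weak G B ∨ t ∈ strong G B := by
  have := hB.degIn_inner_pos hG ht (by omega) h.le
  have := degIn_inner_le (G := G) (B := B) t
  grind [mem_weak, mem_strong]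

theorem exists_isWhiteTwoNbhd_of_mem_weak (hG : IsCubic G) (hB : IsBlackSet G B)
    (hj : j ∈ weak G B) :
    ∃ p q u, IsWhiteTwoNbhd G B j p q u ∧ IsInner G B p ∧ IsLeaf G B q := by
  obtain ⟨hjB, h₂, h₁⟩ := mem_weak.1 hj
  obtain ⟨p, hp, hjp⟩ := degIn_pos.1 (h₁.symm ▸ one_pos)
  obtain ⟨q, hq, hjq, hqp⟩ := exists_adj_ne_of_two_le_degIn h₂.ge p
  obtain ⟨u, hN⟩ := hG.exists_isNbhd_of_adj_of_adj hjp hjq hqp.symm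
  have hpB := (mem_inner.1 hp).1
  have := hN.degIn_eq B
  refine ⟨p, q, u, ⟨hN, hjB, hpB, hq, by grind⟩, mem_inner.1 hp, ?_⟩
  refine (hG.isLeaf_or_isInner hB hq).resolve_right fun hq' => hqp ?_
  exact eq_of_degIn_le_one h₁.le (mem_inner.2 hq') hp hjq hjp

theorem IsMaxBlackSet.mem_of_isLeaf_adj (hG : IsCubic G) (hB : IsMaxBlackSet G B)
    (hy : IsLeaf G B y) (ht : t ∉ B) (hyt : G.Adj y t) :
    t ∈ mixedHubs G B ∨ t ∈ leafHubs G B ∨ t ∈ weak G B := by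
  obtain ⟨a, b, hN⟩ := hG.exists_isNbhd_of_adj hyt.symm
  have hleaf (s : V) (hs : s ∈ B) := hG.isLeaf_or_isInner hB.1 hs
  have hpos := hB.degIn_inner_pos hG ht
  have := hN.degIn_eq B
  have := hN.degIn_eq (inner G B)
  grind [mem_mixedHubs, mem_leafHubs, mem_weak, IsLeafHub, IsLeaf, IsInner, mem_inner]

end Neighbourhoods

section Ends

variable {B : Finset V} {v x j j' y a a' q : V}

/-- `y` is a leaf at distance two from `j`, reached through an inner vertex. -/
def IsEnd (G : SimpleGraph V) (B : Finset V) (j y : V) : Prop :=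
  ∃ x, IsInner G B x ∧ G.Adj j x ∧ G.Adj x y ∧ IsLeaf G B y

theorem IsEnd.exists_isInnerNbhd (hG : IsCubic G) (h : IsEnd G B j y) (hj : j ∉ B) :
    ∃ x z, IsInnerNbhd G B x y z j ∧ G.Adj j x ∧ IsLeaf G B y := by
  obtain ⟨x, hx, hjx, hxy, hy⟩ := h
  obtain ⟨z, hN⟩ := hx.exists_isInnerNbhd_of_adj hG hj hjx.symm hy.1 hxy
  exact ⟨x, z, hN, hjx, hy⟩

theorem IsEnd.eq (hG : IsCubic G) (h : IsEnd G B j y) (h' : IsEnd G B j' y) (hj : j ∉ B)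
    (hj' : j' ∉ B) : j = j' := by
  obtain ⟨x, hx, hjx, hxy, hy⟩ := h
  obtain ⟨x', hx', hjx', hxy', -⟩ := h'
  obtain rfl := hy.eq_of_adj hx.1 hx'.1 hxy.symm hxy'.symm
  exact hG.eq_of_notMem hx.2.ge hj hj' hjx.symm hjx'.symm

variable [Fintype V]

theorem IsOptimal.exists_isEnd_of_mem_weak (hG : IsCubic G) (hB : IsOptimal G B)
    (hj : j ∈ weak G B) : ∃ y, IsEnd G B j y := by
  obtain ⟨p, q, u, hN, hp, hq⟩ := exists_isWhiteTwoNbhd_of_mem_weak hG hB.1 hj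
  obtain ⟨y, z, hpN⟩ := hp.exists_isInnerNbhd hG hN.notMem hN.adj₁.symm
  by_contra! hend
  have hinner (i : V) (hi : i ∈ B) (hpi : G.Adj p i) : IsInner G B i :=
    (hG.isLeaf_or_isInner hB.1 hi).resolve_left fun h => hend i ⟨p, hp, hN.adj₁, hpi, h⟩
  exact hB.not_isInner_of_isWhiteTwoNbhd hG hN hpN hq (hinner y hpN.mem₁ hpN.adj₁)
    (hinner z hpN.mem₂ hpN.adj₂)

theorem IsMaxBlackSet.exists_isWhiteOneNbhd_of_mem_shallow (hG : IsCubic G)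
    (hB : IsMaxBlackSet G B) (hj : j ∈ shallow G B) :
    ∃ x u w, IsWhiteOneNbhd G B j x u w ∧ IsInner G B x := by
  obtain ⟨hjB, h, -⟩ := mem_shallow.1 hj
  obtain ⟨u, hu, hju, -⟩ := hG.exists_white_adj_ne h.le j
  obtain ⟨x, w, hN, hx⟩ := hB.exists_isWhiteOneNbhd hG hjB h hu hju
  exact ⟨x, u, w, hN, hx⟩

theorem IsMaxBlackSet.exists_isEnd_of_mem_shallow (hG : IsCubic G) (hB : IsMaxBlackSet G B)
    (hj : j ∈ shallow G B) : ∃ y, IsEnd G B j y := by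
  obtain ⟨x, u, w, hN, hx⟩ := hB.exists_isWhiteOneNbhd_of_mem_shallow hG hj
  obtain ⟨hjB, h, hdeep⟩ := mem_shallow.1 hj
  by_contra! hend
  refine hdeep (mem_deep.2 ⟨hjB, h, fun i hi hji y hiy hy => hend y ⟨i, ?_, hji, hiy, hy⟩⟩)
  rwa [eq_of_degIn_le_one h.le hi hx.1 hji hN.adj₁]

theorem IsMaxBlackSet.not_adj_leafHub_of_mem_shallow (hG : IsCubic G) (hB : IsMaxBlackSet G B)
    (hj : j ∈ shallow G B) (hy : IsEnd G B j y) (ha : a ∈ leafHubs G B) : ¬ G.Adj y a := by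
  intro hya
  obtain ⟨x, u, w, hN, -⟩ := hB.exists_isWhiteOneNbhd_of_mem_shallow hG hj
  obtain ⟨x', z, hx', hjx', -⟩ := hy.exists_isInnerNbhd hG hN.notMem
  obtain rfl := eq_of_degIn_le_one (mem_shallow.1 hj).2.1.le hx'.mem hN.mem₁ hjx' hN.adj₁
  exact hB.not_isLeafHub_of_isWhiteOneNbhd hG hN hx' hya.symm (mem_leafHubs.1 ha)

theorem IsEnd.exists_nbhd_of_mem_weak (hG : IsCubic G) (hB : IsBlackSet G B) (hj : j ∈ weak G B)
    (hy : IsEnd G B j y) :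
    ∃ p q u z, IsWhiteTwoNbhd G B j p q u ∧ IsInnerNbhd G B p y z j ∧ IsLeaf G B q := by
  obtain ⟨p, q, u, hN, hp, hq⟩ := exists_isWhiteTwoNbhd_of_mem_weak hG hB hj
  obtain ⟨x, z, hx, hjx, -⟩ := hy.exists_isInnerNbhd hG hN.notMem
  obtain rfl := eq_of_degIn_le_one (mem_weak.1 hj).2.2.le (mem_inner.2 hx.isInner)
    (mem_inner.2 hp) hjx hN.adj₁
  exact ⟨x, q, u, z, hN, hx, hq⟩

theorem IsMaxBlackSet.eq_of_adj_leafHub_of_mem_weak (hG : IsCubic G) (hB : IsMaxBlackSet G B)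
    (hj : j ∈ weak G B) (hy : IsEnd G B j y) (ha : a ∈ leafHubs G B) (ha' : a' ∈ leafHubs G B)
    (hya : G.Adj y a) (hya' : G.Adj y a') : a = a' := by
  rw [mem_leafHubs] at ha ha'
  obtain ⟨p, q, u, z, hN, hp, hq⟩ := hy.exists_nbhd_of_mem_weak hG hB.1 hj
  have hqa := (hB.adj_of_isLeafHub hG hN hp hq ha hya.symm).1
  have hqa' := (hB.adj_of_isLeafHub hG hN hp hq ha' hya'.symm).1
  obtain ⟨r, hr, hqr⟩ := (hB.1 q hq.1).1
  obtain ⟨o, hqN⟩ := hq.exists_isLeafNbhd hG hr hN.notMem hqr hN.adj₂.symm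
  grind [IsLeaf]

theorem isInner_of_mem_deep (hG : IsCubic G) (hB : IsBlackSet G B) (hv : v ∈ deep G B) (hx : x ∈ B)
    (hvx : G.Adj v x) (hy : y ∈ B) (hxy : G.Adj x y) : IsInner G B y :=
  (hG.isLeaf_or_isInner hB hy).resolve_left ((mem_deep.1 hv).2.2 x hx hvx y hxy)

/-- The vertices involved would form a `HubConfig`. -/
theorem IsOptimal.not_isEnd_of_adj_deep (hG : IsCubic G) (hB : IsOptimal G B)
    (hv : v ∈ deep G B) (hj : j ∈ weak G B) (hjv : G.Adj j v)
    (hy : IsEnd G B j y) (ha : a ∈ leafHubs G B) (hya : G.Adj y a)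
    (hall : ∀ y', IsEnd G B j y' → ∃ a' ∈ leafHubs G B, G.Adj y' a') (hjq : G.Adj j q) :
    ¬ IsEnd G B j' q := by
  intro hq
  rw [mem_leafHubs] at ha
  obtain ⟨hvB, hv₁, -⟩ := mem_deep.1 hv
  obtain ⟨p, q₀, v₀, m, hN, hp, hq₀⟩ := hy.exists_nbhd_of_mem_weak hG hB.1 hj
  obtain ⟨r, hr, -, hrq, hqL⟩ := hq
  have hpI := hp.isInner
  obtain rfl : q = q₀ := by grind [IsLeaf, IsInner]
  obtain rfl : v = v₀ := by grind
  have hyL : IsLeaf G B y := ha.2 y hya.symm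
  obtain ⟨hqa, hqy⟩ := hB.isMaxBlackSet.adj_of_isLeafHub hG hN hp hqL ha hya.symm
  obtain ⟨x, w, hvN, hx⟩ := hB.isMaxBlackSet.exists_isWhiteOneNbhd hG hvB hv₁ hN.notMem hjv.symm
  obtain ⟨x₁, x₂, hxN⟩ := hx.exists_isInnerNbhd hG hvB hvN.adj₁.symm
  obtain ⟨b, hyN⟩ := hyL.exists_isLeafNbhd hG hp.mem ha.1 hp.adj₁.symm hya
  obtain ⟨s, haN⟩ := hG.exists_isNbhd_of_adj_of_adj hya.symm hqa.symm hqy.symm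
  obtain ⟨a₀, hqN⟩ := hqL.exists_isLeafNbhd hG hr.1 hN.notMem hrq.symm hjq.symm
  obtain rfl : a = a₀ := by grind [IsLeaf]
  refine HubConfig.false_of_isLeafHub_adj_m hG hB
    { v, x, u := j, w, y := x₁, z := x₂, p, q, r, l := y, m, a, b, s
      nbhd_v := hvN, nbhd_x := hxN, nbhd_u := hN, nbhd_p := hp, nbhd_l := hyN
      isLeafHub_a := ha, nbhd_a := haN, nbhd_q := hqN, isInner_r := hr
      isInner_y := isInner_of_mem_deep hG hB.1 hv hvN.mem₁ hvN.adj₁ hxN.mem₁ hxN.adj₁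
      isInner_z := isInner_of_mem_deep hG hB.1 hv hvN.mem₁ hvN.adj₁ hxN.mem₂ hxN.adj₂ } ?_
  intro hm
  obtain ⟨a', ha', hma'⟩ := hall m ⟨p, hp.isInner, hN.adj₁, hp.adj₂, hm⟩
  exact ⟨a', mem_leafHubs.1 ha', hma'.symm⟩

end Ends

section Strong

variable [Fintype V] {B : Finset V} {v u : V}

theorem IsOptimal.mem_strong_of_adj_remote (hG : IsCubic G) (hB : IsOptimal G B)
    (hv : v ∈ remote G B) (hvu : G.Adj v u) : u ∈ strong G B := by
  have hmax := hB.isMaxBlackSet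
  obtain ⟨hvB, hv'⟩ := mem_remote.1 hv
  have hu := hv' u hvu
  obtain ⟨a, b, hN⟩ := hG.exists_isNbhd_of_adj hvu.symm
  have hdeg := hN.degIn_eq B
  have hdeg₀ : degIn G B u ≠ 0 := fun h =>
    hmax.not_adj_of_mem_remote hG hv (mem_remote_iff_degIn_eq_zero.2 ⟨hu, h⟩) hvu
  have hdeg₁ : degIn G B u ≠ 1 := by
    intro h
    obtain ⟨x, w, hu', -⟩ := hmax.exists_isWhiteOneNbhd hG hu h hvB hvu.symm
    exact hmax.not_isWhiteOneNbhd_remote hG hv hu'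
  have hdeg₂ : degIn G B u = 2 := by grind
  refine (hmax.mem_weak_or_mem_strong hG hu hdeg₂).resolve_left fun hweak => ?_
  obtain ⟨y, hy⟩ := hB.exists_isEnd_of_mem_weak hG hweak
  obtain ⟨p, q, v', z, hu', hp, hq⟩ := hy.exists_nbhd_of_mem_weak hG hB.1 hweak
  obtain rfl := hG.eq_of_notMem hdeg₂.ge hu'.notMem₃ hvB hu'.adj₃ hvu.symm
  exact hB.not_isLeaf_of_isWhiteTwoNbhd_remote hG hu' hp hq hv hy.choose_spec.2.2.2

theorem IsOptimal.exists_mem_strong_adj (hG : IsCubic G) (hB : IsOptimal G B) (hv : v ∈ deep G B)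
    (hv' : v ∉ weakDeep G B) : ∃ u ∈ strong G B, G.Adj v u := by
  have hmax := hB.isMaxBlackSet
  obtain ⟨hvB, hv₁, -⟩ := mem_deep.1 hv
  obtain ⟨u, hu, hvu, hweak⟩ : ∃ u ∉ B, G.Adj v u ∧ u ∉ weak G B := by
    by_contra! h
    exact hv' (mem_weakDeep.2 ⟨hv, h⟩)
  obtain ⟨x, w, hvN, hx⟩ := hmax.exists_isWhiteOneNbhd hG hvB hv₁ hu hvu
  obtain ⟨a, b, hN⟩ := hG.exists_isNbhd_of_adj hvu.symm
  have hdeg := hN.degIn_eq B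
  have hdeg₀ : degIn G B u ≠ 0 := fun h =>
    hmax.not_isWhiteOneNbhd_remote hG (mem_remote_iff_degIn_eq_zero.2 ⟨hu, h⟩) hvN
  have hdeg₁ : degIn G B u ≠ 1 := by
    intro h
    obtain ⟨x', w', huN, -⟩ := hmax.exists_isWhiteOneNbhd hG hu h hvB hvu.symm
    obtain ⟨y, z, hxN⟩ := hx.exists_isInnerNbhd hG hvB hvN.adj₁.symm
    exact hB.not_isWhiteOneNbhd_of_adj_deep hG
      ⟨hvN.toIsNbhd.rotate.swap.rotate.rotate, hvB, hvN.mem₁, hvN.notMem₃, hu⟩ hxN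
      (isInner_of_mem_deep hG hB.1 hv hvN.mem₁ hvN.adj₁ hxN.mem₁ hxN.adj₁)
      (isInner_of_mem_deep hG hB.1 hv hvN.mem₁ hvN.adj₁ hxN.mem₂ hxN.adj₂) huN
  have hdeg₂ : degIn G B u = 2 := by grind
  exact ⟨u, (hmax.mem_weak_or_mem_strong hG hu hdeg₂).resolve_left hweak, hvu⟩

end Strong

section Count

variable {B S T : Finset V} {e : V → V}

theorem card_le_sum_degIn (h : ∀ t ∈ T, ∃ s ∈ S, G.Adj t s) : #T ≤ ∑ t ∈ T, degIn G S t := by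
  rw [card_eq_sum_ones]
  exact sum_le_sum fun t ht => degIn_pos.2 (h t ht)

theorem sum_degIn_le_card (h : ∀ t ∈ T, degIn G S t ≤ 1) : ∑ t ∈ T, degIn G S t ≤ #T := by
  simpa using sum_le_card_nsmul T _ 1 h

variable [Fintype V]

/-- Double count the edges from strong vertices to remote and deep ones. -/
theorem IsOptimal.card_remote_add_card_deep_le (hG : IsCubic G) (hB : IsOptimal G B) :
    3 * #(remote G B) + #(deep G B) ≤ #(strong G B) + #(weakDeep G B) := by
  classical
  set D := deep G B \ weakDeep G B
  have hD : #D + #(weakDeep G B) = #(deep G B) :=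
    card_sdiff_add_card_eq_card (filter_subset _ _)
  have hdisj : Disjoint (remote G B) D := disjoint_left.2 fun t ht ht' => by
    grind [mem_remote_iff_degIn_eq_zero, mem_deep]
  have hremote : 3 * #(remote G B) ≤ ∑ t ∈ remote G B, degIn G (strong G B) t := by
    rw [mul_comm]
    refine card_nsmul_le_sum _ _ 3 fun t ht => ?_
    rw [← hG.degIn_univ t]
    exact degIn_le_of_forall_adj fun u _ => hB.mem_strong_of_adj_remote hG ht
  have hdeep : #D ≤ ∑ t ∈ D, degIn G (strong G B) t :=
    card_le_sum_degIn fun t ht => hB.exists_mem_strong_adj hG (mem_sdiff.1 ht).1 (mem_sdiff.1 ht).2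
  have hstrong : ∑ t ∈ strong G B, degIn G (remote G B ∪ D) t ≤ #(strong G B) := by
    refine sum_degIn_le_card fun t ht => degIn_le_one fun a ha b hb => ?_
    have hwhite (a : V) (ha : a ∈ remote G B ∪ D) : a ∉ B := by grind [mem_deep]
    exact hG.eq_of_notMem (mem_strong.1 ht).2.1.ge (hwhite a ha) (hwhite b hb)
  rw [← sum_degIn_comm, sum_union hdisj] at hstrong
  omega

theorem IsCubic.two_mul_card_weakDeep (hG : IsCubic G) (B : Finset V) :
    2 * #(weakDeep G B) ≤ ∑ j ∈ weak G B, degIn G (weakDeep G B) j := by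
  classical
  rw [sum_degIn_comm, mul_comm]
  refine card_nsmul_le_sum _ _ 2 fun v hv => ?_
  obtain ⟨hv, hweak⟩ := mem_weakDeep.1 hv
  have := hG.degIn_add_degIn_compl B v
  have := (mem_deep.1 hv).2.1
  have : degIn G Bᶜ v ≤ degIn G (weak G B) v :=
    degIn_le_of_forall_adj fun u hu => hweak u (mem_compl.1 hu)
  omega

/-- `e` chooses an end of every shallow and of every weak vertex; the end of a weak vertex is
adjacent to a leaf hub only if all the ends of that vertex are. -/
structure IsEndChoice (G : SimpleGraph V) (B : Finset V) (e : V → V) : Prop where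
  isEnd : ∀ j, j ∈ shallow G B ∨ j ∈ weak G B → IsEnd G B j (e j)
  exists_adj_leafHub : ∀ j ∈ weak G B, ∀ a ∈ leafHubs G B, G.Adj (e j) a →
    ∀ y, IsEnd G B j y → ∃ a' ∈ leafHubs G B, G.Adj y a'

theorem IsOptimal.exists_isEndChoice (hG : IsCubic G) (hB : IsOptimal G B) :
    ∃ e, IsEndChoice G B e := by
  have (j : V) : ∃ y, (j ∈ shallow G B ∨ j ∈ weak G B → IsEnd G B j y) ∧
      ∀ a ∈ leafHubs G B, G.Adj y a → ∀ y', IsEnd G B j y' → ∃ a' ∈ leafHubs G B, G.Adj y' a' := by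
    by_cases h : ∃ y, IsEnd G B j y ∧ ∀ a ∈ leafHubs G B, ¬ G.Adj y a
    · obtain ⟨y, hy, hya⟩ := h
      exact ⟨y, fun _ => hy, fun a ha h => absurd h (hya a ha)⟩
    · push Not at h
      by_cases hj : j ∈ shallow G B ∨ j ∈ weak G B
      · obtain ⟨y, hy⟩ := hj.elim (hB.isMaxBlackSet.exists_isEnd_of_mem_shallow hG)
          (hB.exists_isEnd_of_mem_weak hG)
        exact ⟨y, fun _ => hy, fun _ _ _ => h⟩
      · exact ⟨j, fun h => absurd h hj, fun _ _ _ => h⟩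
  choose e he hall using this
  exact ⟨e, he, fun j _ => hall j⟩

open Classical in
/-- The ends chosen by `e`. -/
noncomputable def chosenEnds (G : SimpleGraph V) (B : Finset V) (e : V → V) : Finset V :=
  (shallow G B ∪ weak G B).image e

theorem mem_chosenEnds {y : V} :
    y ∈ chosenEnds G B e ↔ ∃ j, (j ∈ shallow G B ∨ j ∈ weak G B) ∧ e j = y := by
  simp [chosenEnds]

namespace IsEndChoice

theorem isLeaf_of_mem_chosenEnds (he : IsEndChoice G B e) {y : V} (hy : y ∈ chosenEnds G B e) :
    IsLeaf G B y := by
  obtain ⟨j, hj, rfl⟩ := mem_chosenEnds.1 hy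
  obtain ⟨x, -, -, -, h⟩ := he.isEnd j hj
  exact h

theorem sum_chosenEnds (hG : IsCubic G) (he : IsEndChoice G B e) (f : V → ℕ) :
    ∑ y ∈ chosenEnds G B e, f y = ∑ j ∈ shallow G B, f (e j) + ∑ j ∈ weak G B, f (e j) := by
  classical
  have hdisj : Disjoint (shallow G B) (weak G B) := disjoint_left.2 fun t ht ht' => by
    grind [mem_shallow, mem_weak]
  have hend (j : V) (hj : j ∈ shallow G B ∪ weak G B) : j ∉ B ∧ IsEnd G B j (e j) := by
    grind [mem_shallow, mem_weak, he.isEnd j]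
  rw [chosenEnds, sum_image fun j hj j' hj' h => ?_, sum_union hdisj]
  exact (h ▸ (hend j hj).2).eq hG (hend j' hj').2 (hend j hj).1 (hend j' hj').1

theorem sum_degIn_leafHubs_le (hG : IsCubic G) (hB : IsMaxBlackSet G B) (he : IsEndChoice G B e) :
    ∑ y ∈ chosenEnds G B e, degIn G (leafHubs G B) y ≤
      ∑ j ∈ weak G B, degIn G (leafHubs G B) (e j) := by
  have : ∑ j ∈ shallow G B, degIn G (leafHubs G B) (e j) = 0 := sum_eq_zero fun j hj => by
    by_contra h
    obtain ⟨a, ha, hja⟩ := degIn_pos.1 (Nat.pos_of_ne_zero h)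
    exact hB.not_adj_leafHub_of_mem_shallow hG hj (he.isEnd j (.inl hj)) ha hja
  rw [he.sum_chosenEnds hG, this, zero_add]

theorem degIn_add_degIn_add_degIn_le (hG : IsCubic G) (hB : IsOptimal G B)
    (he : IsEndChoice G B e) {j : V} (hj : j ∈ weak G B) :
    degIn G (leafHubs G B) (e j) + degIn G (chosenEnds G B e) j + degIn G (weakDeep G B) j ≤ 2 := by
  have hend := he.isEnd j (.inr hj)
  have hhub : degIn G (leafHubs G B) (e j) ≤ 1 := degIn_le_one fun a ha a' ha' =>
    hB.isMaxBlackSet.eq_of_adj_leafHub_of_mem_weak hG hj hend ha ha'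
  have hends : degIn G (chosenEnds G B e) j ≤ 1 := by
    obtain ⟨p, q, u, hN, hp, -⟩ := exists_isWhiteTwoNbhd_of_mem_weak hG hB.1 hj
    have hq (y : V) (hy : y ∈ chosenEnds G B e) (hjy : G.Adj j y) : y = q := by
      grind [he.isLeaf_of_mem_chosenEnds hy, IsLeaf, IsInner]
    exact degIn_le_one fun y hy y' hy' h h' => (hq y hy h).trans (hq y' hy' h').symm
  have hdeep : degIn G (weakDeep G B) j ≤ 1 := degIn_le_one fun v hv v' hv' =>
    hG.eq_of_notMem (mem_weak.1 hj).2.1.ge (mem_deep.1 (mem_weakDeep.1 hv).1).1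
      (mem_deep.1 (mem_weakDeep.1 hv').1).1
  by_contra! h
  obtain ⟨a, ha, hja⟩ := degIn_pos.1 (show 0 < degIn G (leafHubs G B) (e j) by omega)
  obtain ⟨_, hq, hjq⟩ := degIn_pos.1 (show 0 < degIn G (chosenEnds G B e) j by omega)
  obtain ⟨v, hv, hjv⟩ := degIn_pos.1 (show 0 < degIn G (weakDeep G B) j by omega)
  obtain ⟨j', hj', rfl⟩ := mem_chosenEnds.1 hq
  exact hB.not_isEnd_of_adj_deep hG (mem_weakDeep.1 hv).1 hj hjv hend ha hja
    (he.exists_adj_leafHub j hj a ha hja) hjq (he.isEnd j' hj')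

theorem sum_degIn_mixedHubs_le (hG : IsCubic G) (he : IsEndChoice G B e) :
    ∑ y ∈ chosenEnds G B e, degIn G (mixedHubs G B) y ≤
      2 * ∑ t ∈ mixedHubs G B, degIn G (inner G B) t := by
  classical
  rw [sum_degIn_comm, mul_sum]
  refine sum_le_sum fun t ht => ?_
  have hsub : chosenEnds G B e ⊆ (inner G B)ᶜ := fun y hy => by
    simpa [mem_inner] using (he.isLeaf_of_mem_chosenEnds hy).not_isInner
  have := degIn_mono (G := G) hsub t
  have := hG.degIn_add_degIn_compl (inner G B) t
  have := (mem_mixedHubs.1 ht).2.2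
  omega

end IsEndChoice

theorem IsMaxBlackSet.two_le_degIn_of_isLeaf (hG : IsCubic G) (hB : IsMaxBlackSet G B) {y : V}
    (hy : IsLeaf G B y) :
    2 ≤ degIn G (mixedHubs G B) y + degIn G (leafHubs G B) y + degIn G (weak G B) y := by
  classical
  have hcompl : degIn G Bᶜ y ≤ degIn G (mixedHubs G B ∪ leafHubs G B ∪ weak G B) y :=
    degIn_le_of_forall_adj fun t ht hyt => by
      simpa [or_assoc] using hB.mem_of_isLeaf_adj hG hy (mem_compl.1 ht) hyt
  have := degIn_union_le (G := G) (mixedHubs G B ∪ leafHubs G B) (weak G B) y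
  have := degIn_union_le (G := G) (mixedHubs G B) (leafHubs G B) y
  have := hG.degIn_add_degIn_compl B y
  have := hy.2
  omega

/-- Double count the edges from the chosen ends to white vertices. -/
theorem IsOptimal.card_shallow_add_card_weakDeep_le (hG : IsCubic G) (hB : IsOptimal G B) :
    #(shallow G B) + #(weakDeep G B) ≤ ∑ t ∈ mixedHubs G B, degIn G (inner G B) t := by
  obtain ⟨e, he⟩ := hB.exists_isEndChoice hG
  have hcard : #(chosenEnds G B e) = #(shallow G B) + #(weak G B) := by
    simpa using he.sum_chosenEnds hG fun _ => 1
  have hends : #(chosenEnds G B e) * 2 ≤ ∑ y ∈ chosenEnds G B e,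
      (degIn G (mixedHubs G B) y + degIn G (leafHubs G B) y + degIn G (weak G B) y) :=
    card_nsmul_le_sum _ _ 2 fun y hy =>
      hB.isMaxBlackSet.two_le_degIn_of_isLeaf hG (he.isLeaf_of_mem_chosenEnds hy)
  have hweak : ∑ j ∈ weak G B, (degIn G (leafHubs G B) (e j) + degIn G (chosenEnds G B e) j +
      degIn G (weakDeep G B) j) ≤ #(weak G B) * 2 :=
    sum_le_card_nsmul _ _ 2 fun j hj => he.degIn_add_degIn_add_degIn_le hG hB hj
  simp only [sum_add_distrib] at hends hweak
  have hswap : ∑ y ∈ chosenEnds G B e, degIn G (weak G B) y =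
    ∑ j ∈ weak G B, degIn G (chosenEnds G B e) j := sum_degIn_comm _ _
  have hmixed := he.sum_degIn_mixedHubs_le hG
  have hleaf := he.sum_degIn_leafHubs_le hG hB.isMaxBlackSet
  have hdeep := hG.two_mul_card_weakDeep B
  omega

end Count

section CardCompl

variable [DecidableEq V] {B : Finset V}

theorem sum_ite_mem_of_subset {S T : Finset V} (h : S ⊆ T) (f : V → ℕ) :
    ∑ t ∈ T, (if t ∈ S then f t else 0) = ∑ t ∈ S, f t := by
  rw [sum_ite_mem, inter_eq_right.2 h]

theorem card_eq_sum_ite_mem {S T : Finset V} (h : S ⊆ T) :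
    #S = ∑ t ∈ T, if t ∈ S then 1 else 0 := by
  rw [sum_ite_mem_of_subset h, card_eq_sum_ones]

variable [Fintype V]

theorem IsCubic.sum_degIn_inner (hG : IsCubic G) (B : Finset V) :
    ∑ t ∈ Bᶜ, degIn G (inner G B) t = #(inner G B) := by
  rw [sum_degIn_comm, card_eq_sum_ones]
  refine sum_congr rfl fun x hx => ?_
  have := hG.degIn_add_degIn_compl B x
  have := (mem_inner.1 hx).2
  omega

/-- Count the edges between black and white vertices from both sides. -/
theorem IsCubic.card_inner_add (hG : IsCubic G) (hB : IsBlackSet G B) :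
    3 * #Bᶜ + #(inner G B) = 2 * #B + ∑ t ∈ Bᶜ, degIn G Bᶜ t := by
  have hwhite : ∑ t ∈ Bᶜ, degIn G B t + ∑ t ∈ Bᶜ, degIn G Bᶜ t = 3 * #Bᶜ := by
    rw [← sum_add_distrib, sum_congr rfl fun t _ => hG.degIn_add_degIn_compl B t, sum_const,
      smul_eq_mul, mul_comm]
  have hblack : ∑ x ∈ B, degIn G Bᶜ x + #(inner G B) = 2 * #B := by
    rw [card_eq_sum_ite_mem inner_subset, ← sum_add_distrib, mul_comm,
      ← smul_eq_mul, ← sum_const]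
    refine sum_congr rfl fun x hx => ?_
    have := hG.degIn_add_degIn_compl B x
    grind [mem_inner, IsLeaf, IsInner, hG.isLeaf_or_isInner hB hx]
  rw [← sum_degIn_comm] at hblack
  omega

theorem IsMaxBlackSet.sum_degIn_compl_le (hG : IsCubic G) (hB : IsMaxBlackSet G B) :
    ∑ t ∈ Bᶜ, degIn G Bᶜ t ≤ #(weak G B) + #(strong G B) +
      2 * (#(shallow G B) + #(deep G B)) + 3 * #(remote G B) := by
  rw [card_eq_sum_ite_mem weak_subset_compl, card_eq_sum_ite_mem strong_subset_compl,
    card_eq_sum_ite_mem shallow_subset_compl, card_eq_sum_ite_mem deep_subset_compl,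
    card_eq_sum_ite_mem remote_subset_compl]
  simp only [mul_sum, ← sum_add_distrib]
  refine sum_le_sum fun t ht => ?_
  rw [mem_compl] at ht
  have := hG.degIn_add_degIn_compl B t
  have := hB.mem_weak_or_mem_strong hG ht
  grind [mem_shallow, mem_remote_iff_degIn_eq_zero]

theorem IsMaxBlackSet.le_sum_degIn_inner (hG : IsCubic G) (hB : IsMaxBlackSet G B) :
    ∑ t ∈ mixedHubs G B, degIn G (inner G B) t + #(weak G B) + 2 * #(strong G B) +
      #(shallow G B) + #(deep G B) ≤ ∑ t ∈ Bᶜ, degIn G (inner G B) t := by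
  rw [card_eq_sum_ite_mem weak_subset_compl, card_eq_sum_ite_mem strong_subset_compl,
    card_eq_sum_ite_mem shallow_subset_compl, card_eq_sum_ite_mem deep_subset_compl,
    ← sum_ite_mem_of_subset mixedHubs_subset_compl]
  simp only [mul_sum, ← sum_add_distrib]
  refine sum_le_sum fun t ht => ?_
  have := hB.degIn_inner_pos hG (mem_compl.1 ht)
  grind [mem_weak, mem_strong, mem_shallow, mem_mixedHubs, mem_deep]

theorem IsOptimal.three_mul_card_compl_le (hG : IsCubic G) (hB : IsOptimal G B) :
    3 * #Bᶜ ≤ 2 * #B := by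
  have hstrong := hB.card_remote_add_card_deep_le hG
  have hmixed := hB.card_shallow_add_card_weakDeep_le hG
  have hwhite := hB.isMaxBlackSet.sum_degIn_compl_le hG
  have hinner := hB.isMaxBlackSet.le_sum_degIn_inner hG
  rw [hG.sum_degIn_inner] at hinner
  have hedges := hG.card_inner_add hB.1
  omega

theorem IsBlackSet.restrainedDominationNumber_le (hB : IsBlackSet G B) :
    restrainedDominationNumber G ≤ #Bᶜ := by
  refine Nat.sInf_le ⟨(Bᶜ : Finset V), ⟨fun v hv => ?_, fun v hv => ?_⟩, Set.ncard_coe_finset _⟩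
  · simpa using (hB v (by simpa using hv)).2
  · simpa using (hB v (by simpa using hv)).1

end CardCompl

end RestrainedDomination

/-- If every vertex of a finite simple graph `G` has degree exactly `3`, then
`5 · γ_r(G) ≤ 2 · |V(G)|`. -/
theorem five_mul_restrainedDominationNumber_le_of_cubic
    {V : Type*} [Fintype V] (G : SimpleGraph V)
    (hcubic : ∀ v : V, (G.neighborSet v).ncard = 3) :
    5 * restrainedDominationNumber G ≤ 2 * Fintype.card V := by
  classical
  obtain ⟨B, hB⟩ := RestrainedDomination.exists_isOptimal G
  have hcount := hB.three_mul_card_compl_le hcubic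
  have hdom := hB.1.restrainedDominationNumber_le
  have hcard := Finset.card_add_card_compl B
  omega
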